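/- arXiv:1303.1551 — 2 statements merged into one kernel-verified Lean document; each statement's English description precedes it below -/
import Mathlib

section
/- Let T be a finite tree with at least 2 vertices that is automorphism-free, and suppose T is minimal, i.e., there is no leaf l of T such that the tree T \ l obtained by deleting l is also automorphism-free. Then T is isomorphic (as a graph) to the tree E7. -/
open SimpleGraph

/-- A graph is automorphism-free if its only automorphism is the trivial (identity) one. -/
def AutFree {V : Type*} (G : SimpleGraph V) : Prop :=
  ∀ φ : G ≃g G, ∀ v : V, φ v = v

/-- A leaf of a graph is a vertex of degree one. -/
def IsLeaf {V : Type*} (G : SimpleGraph V) (l : V) : Prop :=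
  (G.neighborSet l).ncard = 1

/-- The tree `E7`: a vertex of degree three (vertex 0) with three disjoint
paths of lengths 1, 2, and 3 attached (the spider with legs 1, 2, 3). -/
def E7 : SimpleGraph (Fin 7) :=
  SimpleGraph.fromEdgeSet {s(0, 1), s(0, 2), s(2, 3), s(0, 4), s(4, 5), s(5, 6)}

set_option linter.unusedSectionVars false
set_option linter.unusedFintypeInType false
set_option linter.unusedDecidableInType false

section
open Classical Finset

structure Par (V : Type*) where
  p : V → V
  d : V → ℕ
  c : V
  hd : ∀ x, d (p x) = d x - 1
  hc : ∀ x, d x = 0 → x = c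
  dc : d c = 0

namespace Par
variable {V : Type*} [Fintype V] (P : Par V)

/-- Descendants of `v`. -/
noncomputable def D (v : V) : Finset V := Finset.univ.filter (fun x => ∃ k, P.p^[k] x = v)

/-- The graph is described by the parent function. -/
def Fits (G : SimpleGraph V) : Prop := ∀ x y, G.Adj x y ↔ x ≠ y ∧ (P.p x = y ∨ P.p y = x)

def Leaf (l : V) : Prop := ∀ x, P.p x ≠ l

/-- `A` is a rooted subtree with root `a`. -/
def Sub (A : Finset V) (a : V) : Prop := a ∈ A ∧ ∀ x ∈ A, x ≠ a → P.d a < P.d x ∧ P.p x ∈ A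

/-- `f` is a rooted isomorphism from `(A, a)` to `(B, b)`. -/
def RIso (A : Finset V) (a : V) (B : Finset V) (b : V) (f : V → V) : Prop :=
  Set.BijOn f A B ∧ f a = b ∧ ∀ x ∈ A, x ≠ a → P.p (f x) = f (P.p x)

/-- At most one vertex in each level up to relative depth `k`. -/
def W (A : Finset V) (a : V) (k : ℕ) : Prop :=
  ∀ x ∈ A, ∀ y ∈ A, P.d x = P.d y → P.d x ≤ P.d a + k → x = y

theorem p_c : P.p P.c = P.c := P.hc _ (by rw [P.hd, P.dc])

theorem d_pos {x : V} (h : x ≠ P.c) : 0 < P.d x := by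
  by_contra h'
  exact h (P.hc x (by omega))

theorem d_p {x : V} (h : x ≠ P.c) : P.d (P.p x) + 1 = P.d x := by
  have := P.d_pos h
  rw [P.hd]; omega

theorem p_ne {x : V} (h : x ≠ P.c) : P.p x ≠ x := by
  intro h'
  have := P.d_p h
  rw [h'] at this
  omega

theorem ne_c_of_p_ne {x : V} (h : P.p x ≠ x) : x ≠ P.c := by
  rintro rfl; exact h P.p_c

theorem Leaf.ne_c {P : Par V} {l : V} (h : P.Leaf l) : l ≠ P.c := by
  rintro rfl; exact h _ P.p_c

theorem self_mem (v : V) : v ∈ P.D v := by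
  simp only [D, Finset.mem_filter, Finset.mem_univ, true_and]
  exact ⟨0, rfl⟩

theorem step {x v : V} (h : P.p x ∈ P.D v) : x ∈ P.D v := by
  simp only [D, Finset.mem_filter, Finset.mem_univ, true_and] at h ⊢
  obtain ⟨k, hk⟩ := h
  exact ⟨k + 1, by simpa using hk⟩

theorem cases_D {x v : V} (h : x ∈ P.D v) : x = v ∨ P.p x ∈ P.D v := by
  simp only [D, Finset.mem_filter, Finset.mem_univ, true_and] at h ⊢
  obtain ⟨k, hk⟩ := h
  cases k with
  | zero => left; simpa using hk
  | succ k => right; exact ⟨k, by simpa using hk⟩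

theorem d_le {x v : V} (h : x ∈ P.D v) : P.d v ≤ P.d x := by
  simp only [D, Finset.mem_filter, Finset.mem_univ, true_and] at h
  obtain ⟨k, hk⟩ := h
  induction k generalizing x with
  | zero => simp at hk; rw [hk]
  | succ k ih =>
    have := ih (x := P.p x) (by simpa using hk)
    rw [P.hd] at this; omega

theorem eq_of_d_le {x v : V} (h : x ∈ P.D v) (h2 : P.d x ≤ P.d v) : x = v := by
  rcases P.cases_D h with h | h
  · exact h
  · have h3 := P.d_le h
    rw [P.hd] at h3
    have h4 := P.hc x (by omega)
    have h5 := P.hc v (by omega)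
    rw [h4, h5]

theorem d_lt {x v : V} (h : x ∈ P.D v) (h2 : x ≠ v) : P.d v < P.d x := by
  by_contra h3
  exact h2 (P.eq_of_d_le h (by omega))

theorem mem_trans {x v w : V} (h : x ∈ P.D v) (h2 : v ∈ P.D w) : x ∈ P.D w := by
  simp only [D, Finset.mem_filter, Finset.mem_univ, true_and] at h
  obtain ⟨k, hk⟩ := h
  induction k generalizing x with
  | zero => simp at hk; rwa [hk]
  | succ k ih => exact P.step (ih (by simpa using hk))

theorem D_unique {x v w : V} (h : x ∈ P.D v) (h2 : x ∈ P.D w) (h3 : P.d v = P.d w) : v = w := by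
  induction hn : P.d x using Nat.strong_induction_on generalizing x with
  | _ n ih =>
    rcases P.cases_D h with h4 | h4
    · rw [← h4]; exact P.eq_of_d_le h2 (by rw [← h3, h4])
    rcases P.cases_D h2 with h5 | h5
    · rw [← h5]; exact (P.eq_of_d_le h (by rw [h3, h5])).symm
    by_cases hx : x = P.c
    · have e1 := P.eq_of_d_le h (by rw [hx, P.dc]; omega)
      have e2 := P.eq_of_d_le h2 (by rw [hx, P.dc]; omega)
      rw [← e1, ← e2]
    · have := P.d_p hx
      exact ih _ (by omega) h4 h5 rfl

theorem mem_D_c (x : V) : x ∈ P.D P.c := by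
  induction hn : P.d x using Nat.strong_induction_on generalizing x with
  | _ n ih =>
    by_cases hx : x = P.c
    · rw [hx]; exact P.self_mem _
    · have := P.d_p hx
      exact P.step (ih _ (by omega) _ rfl)

theorem exists_child {x v : V} (h : x ∈ P.D v) (h2 : x ≠ v) :
    ∃ w, P.p w = v ∧ w ≠ P.c ∧ x ∈ P.D w := by
  induction hn : P.d x using Nat.strong_induction_on generalizing x with
  | _ n ih =>
    have hx : x ≠ P.c := by
      rintro rfl
      exact h2 (P.eq_of_d_le h (by rw [P.dc]; omega))
    by_cases h3 : P.p x = v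
    · exact ⟨x, h3, hx, P.self_mem _⟩
    · have h4 := (P.cases_D h).resolve_left h2
      have := P.d_p hx
      obtain ⟨w, hw, hw2, hw3⟩ := ih _ (by omega) h4 h3 rfl
      exact ⟨w, hw, hw2, P.step hw3⟩

theorem Sub_D_erase {l v : V} (hl : P.Leaf l) (h : v ≠ l) : P.Sub ((P.D v).erase l) v := by
  refine ⟨by simp [h, P.self_mem], ?_⟩
  intro x hx hxv
  simp only [Finset.mem_erase] at hx ⊢
  exact ⟨P.d_lt hx.2 hxv, hl x, (P.cases_D hx.2).resolve_left hxv⟩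

theorem Sub_D (v : V) : P.Sub (P.D v) v :=
  ⟨P.self_mem v, fun _ hx hxv => ⟨P.d_lt hx hxv, (P.cases_D hx).resolve_left hxv⟩⟩

theorem Sub_univ_erase {l : V} (hl : P.Leaf l) : P.Sub (Finset.univ.erase l) P.c := by
  refine ⟨by simp [hl.ne_c.symm], ?_⟩
  intro x hx hxv
  simp only [Finset.mem_erase, Finset.mem_univ, and_true] at hx ⊢
  exact ⟨by rw [P.dc]; exact P.d_pos hxv, hl x⟩

theorem Sub_compl {b : V} (hb : b ≠ P.c) : P.Sub (Finset.univ \ P.D b) P.c := by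
  have h0 := P.d_pos hb
  refine ⟨?_, ?_⟩
  · simp only [Finset.mem_sdiff, Finset.mem_univ, true_and]
    intro h; have := P.d_le h; rw [P.dc] at this; omega
  · intro x hx hxv
    simp only [Finset.mem_sdiff, Finset.mem_univ, true_and] at hx ⊢
    exact ⟨by rw [P.dc]; exact P.d_pos hxv, fun h => hx (P.step h)⟩

theorem Sub_erase {A : Finset V} {a l : V} (hl : P.Leaf l) (h : a ≠ l) (hA : P.Sub A a) :
    P.Sub (A.erase l) a := by
  refine ⟨by simp [h, hA.1], ?_⟩
  intro x hx hxv
  simp only [Finset.mem_erase] at hx ⊢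
  exact ⟨(hA.2 x hx.2 hxv).1, hl x, (hA.2 x hx.2 hxv).2⟩

section iso
variable {P} {A B : Finset V} {a b : V} {f : V → V}

theorem RIso.depth (hA : P.Sub A a) (hB : P.Sub B b) (h : P.RIso A a B b f) :
    ∀ x ∈ A, P.d (f x) + P.d a = P.d x + P.d b := by
  intro x
  induction hn : P.d x using Nat.strong_induction_on generalizing x with
  | _ n ih =>
    intro hx
    by_cases hxa : x = a
    · rw [hxa] at hn ⊢; rw [h.2.1]; omega
    · obtain ⟨h1, h2⟩ := hA.2 x hx hxa
      have hxc : x ≠ P.c := by rintro rfl; rw [P.dc] at h1; omega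
      have h3 := P.d_p hxc
      have h4 := ih _ (by omega) _ rfl h2
      have h5 : f x ≠ b := by
        rw [← h.2.1]
        intro h6
        exact hxa (h.1.2.1 hx hA.1 h6)
      have h7 := (hB.2 _ (h.1.1 hx) h5).1
      have h8 : f x ≠ P.c := by intro h9; rw [h9, P.dc] at h7; omega
      have h9 := P.d_p h8
      rw [h.2.2 x hx hxa] at h9
      omega

theorem RIso.mem_D_iff (hA : P.Sub A a) (hB : P.Sub B b) (h : P.RIso A a B b f) {w : V}
    (hw : w ∈ A) : ∀ x ∈ A, x ∈ P.D w ↔ f x ∈ P.D (f w) := by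
  intro x
  induction hn : P.d x using Nat.strong_induction_on generalizing x with
  | _ n ih =>
    intro hx
    by_cases hxw : x = w
    · subst hxw; simp [self_mem]
    have hfx : f x ≠ f w := fun h6 => hxw (h.1.2.1 hx hw h6)
    by_cases hxa : x = a
    · have hw' : P.d a < P.d w := (hA.2 w hw (by rintro rfl; exact hxw hxa)).1
      constructor
      · intro h1; have := P.d_le h1; rw [hxa] at this; omega
      · intro h1
        have := P.d_le h1
        have e1 := h.depth hA hB x hx
        have e2 := h.depth hA hB w hw
        rw [hxa] at *
        omega
    · obtain ⟨h1, h2⟩ := hA.2 x hx hxa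
      have hxc : x ≠ P.c := by rintro rfl; rw [P.dc] at h1; omega
      have h3 := P.d_p hxc
      have h4 := ih _ (by omega) _ rfl h2
      rw [← h.2.2 x hx hxa] at h4
      constructor
      · intro h5
        exact P.step (h4.1 ((P.cases_D h5).resolve_left hxw))
      · intro h5
        exact P.step (h4.2 ((P.cases_D h5).resolve_left hfx))

theorem RIso.restrict (hA : P.Sub A a) (hB : P.Sub B b) (h : P.RIso A a B b f) {w : V}
    (hw : w ∈ A) : P.RIso (A ∩ P.D w) w (B ∩ P.D (f w)) (f w) f := by
  have hk := h.mem_D_iff hA hB hw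
  refine ⟨⟨?_, ?_, ?_⟩, rfl, ?_⟩
  · intro x hx
    simp only [Finset.coe_inter, Set.mem_inter_iff, Finset.mem_coe] at hx ⊢
    exact ⟨h.1.1 hx.1, (hk x hx.1).1 hx.2⟩
  · exact h.1.2.1.mono (by simp)
  · intro y hy
    simp only [Finset.coe_inter, Set.mem_inter_iff, Finset.mem_coe] at hy
    obtain ⟨x, hx, rfl⟩ := h.1.2.2 hy.1
    exact ⟨x, by simp only [Finset.coe_inter]; exact ⟨hx, (hk x hx).2 hy.2⟩, rfl⟩
  · intro x hx hxw
    simp only [Finset.mem_inter] at hx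
    apply h.2.2 x hx.1
    rintro rfl
    have h1 := P.d_lt hx.2 hxw
    have h2 := (hA.2 w hw (by rintro rfl; exact hxw rfl)).1
    omega

theorem RIso.card (h : P.RIso A a B b f) : A.card = B.card := by
  have := h.1.image_eq
  rw [← Finset.card_image_of_injOn h.1.2.1]
  congr 1
  apply Finset.coe_injective
  rw [Finset.coe_image, this]

theorem RIso.W_right (hA : P.Sub A a) (hB : P.Sub B b) (h : P.RIso A a B b f) {k : ℕ}
    (hW : P.W A a k) : P.W B b k := by
  intro x hx y hy hxy hd
  obtain ⟨x, hx', rfl⟩ := h.1.2.2 hx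
  obtain ⟨y, hy', rfl⟩ := h.1.2.2 hy
  have e1 := h.depth hA hB x hx'
  have e2 := h.depth hA hB y hy'
  rw [hW x hx' y hy' (by omega) (by omega)]

theorem RIso.W_left (hA : P.Sub A a) (hB : P.Sub B b) (h : P.RIso A a B b f) {k : ℕ}
    (hW : P.W B b k) : P.W A a k := by
  intro x hx y hy hxy hd
  have e1 := h.depth hA hB x hx
  have e2 := h.depth hA hB y hy
  exact h.1.2.1 hx hy (hW _ (h.1.1 hx) _ (h.1.1 hy) (by omega) (by omega))

theorem W_zero (hA : P.Sub A a) : P.W A a 0 := by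
  intro x hx y hy hxy hd
  by_contra hne
  by_cases hxa : x = a
  · have := (hA.2 y hy (by rintro rfl; exact hne hxa)).1
    rw [hxa] at hxy; omega
  · have := (hA.2 x hx hxa).1
    omega

theorem W_mono {A' : Finset V} {k : ℕ} (h : A' ⊆ A) (hW : P.W A a k) : P.W A' a k :=
  fun x hx y hy => hW x (h hx) y (h hy)

theorem image_eq_range (hA : P.Sub A a) (hW : ∀ k, P.W A a k) :
    A.image (fun x => P.d x - P.d a) = Finset.range A.card := by
  have hge : ∀ x ∈ A, P.d a ≤ P.d x := by
    intro x hx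
    by_cases hxa : x = a
    · rw [hxa]
    · exact (hA.2 x hx hxa).1.le
  have hcard : (A.image (fun x => P.d x - P.d a)).card = A.card := by
    apply Finset.card_image_of_injOn
    intro x hx y hy hxy
    have h1 := hge x hx
    have h2 := hge y hy
    simp only at hxy
    exact hW (P.d x) x hx y hy (by omega) (by omega)
  have down : ∀ j, ∀ x ∈ A, j ≤ P.d x - P.d a → j ∈ A.image (fun x => P.d x - P.d a) := by
    intro j x
    induction hn : P.d x using Nat.strong_induction_on generalizing x with
    | _ n ih =>
      intro hx hj
      by_cases hj' : j = n - P.d a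
      · rw [hj', ← hn]; exact Finset.mem_image_of_mem _ hx
      · have hxa : x ≠ a := by rintro rfl; omega
        obtain ⟨h1, h2⟩ := hA.2 x hx hxa
        have h3 := P.hd x
        exact ih _ (by omega) _ rfl h2 (by omega)
  apply Finset.eq_of_subset_of_card_le
  · intro j hj
    have hsub : Finset.range (j+1) ⊆ A.image (fun x => P.d x - P.d a) := by
      intro i hi
      rw [Finset.mem_image] at hj
      obtain ⟨x, hx, rfl⟩ := hj
      rw [Finset.mem_range] at hi
      exact down i x hx (by omega)
    have := Finset.card_le_card hsub
    rw [hcard, Finset.card_range] at this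
    rw [Finset.mem_range]; omega
  · rw [hcard, Finset.card_range]

theorem path_iso (hA : P.Sub A a) (hB : P.Sub B b) (hWA : ∀ k, P.W A a k) (hWB : ∀ k, P.W B b k)
    (hc : A.card = B.card) : ∃ f, P.RIso A a B b f := by
  have eA := image_eq_range hA hWA
  have eB := image_eq_range hB hWB
  have hge : ∀ {A : Finset V} {a : V}, P.Sub A a → ∀ x ∈ A, P.d a ≤ P.d x := by
    intro A a hA x hx
    by_cases hxa : x = a
    · rw [hxa]
    · exact (hA.2 x hx hxa).1.le
  have ex : ∀ x, ∃ y, x ∈ A → y ∈ B ∧ P.d y - P.d b = P.d x - P.d a := by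
    intro x
    by_cases hx : x ∈ A
    · have : P.d x - P.d a ∈ B.image (fun x => P.d x - P.d b) := by
        rw [eB, ← hc, ← eA]; exact Finset.mem_image_of_mem _ hx
      obtain ⟨y, hy, hy2⟩ := Finset.mem_image.1 this
      exact ⟨y, fun _ => ⟨hy, hy2⟩⟩
    · exact ⟨x, fun h => absurd h hx⟩
  choose f hf using ex
  have inj : Set.InjOn f A := by
    intro x hx y hy hxy
    have h1 := (hf x hx).2
    have h2 := (hf y hy).2
    have h3 := hge hA x hx
    have h4 := hge hA y hy
    rw [hxy] at h1
    exact hWA (P.d x) x hx y hy (by omega) (by omega)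
  have maps : Set.MapsTo f A B := fun x hx => (hf x hx).1
  refine ⟨f, ⟨maps, inj, ?_⟩, ?_, ?_⟩
  · exact Finset.surjOn_of_injOn_of_card_le f maps inj hc.ge
  · by_contra hne
    have h1 := (hB.2 _ (hf a hA.1).1 hne).1
    have h2 := (hf a hA.1).2
    omega
  · intro x hx hxa
    obtain ⟨h1, h2⟩ := hA.2 x hx hxa
    have hh := hf x hx
    have h3 := hge hB _ hh.1
    have hne : f x ≠ b := by intro h; rw [h] at hh; omega
    obtain ⟨h4, h5⟩ := hB.2 _ hh.1 hne
    have h6 := hf _ h2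
    have h7 := P.hd x
    have h8 := P.hd (f x)
    have h9 := hge hB _ h6.1
    exact hWB (P.d (f x)) _ h5 _ h6.1 (by omega) (by omega)

end iso

theorem D_subset {v w : V} (h : w ∈ P.D v) : P.D w ⊆ P.D v := fun _ hx => P.mem_trans hx h

theorem sib {x v w : V} (h : P.p v = P.p w) (hv : v ≠ P.c) (hw : w ≠ P.c) (h1 : x ∈ P.D v)
    (h2 : x ∈ P.D w) : v = w := by
  apply P.D_unique h1 h2
  rw [← P.d_p hv, ← P.d_p hw, h]

theorem child_mem {w v : V} (h : P.p w = v) : w ∈ P.D v := P.step (by rw [h]; exact P.self_mem v)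

theorem parent_not_mem {w : V} (hw : w ≠ P.c) : P.p w ∉ P.D w := by
  intro h
  have := P.d_le h
  have := P.d_p hw
  omega

theorem erase_inter {v w l : V} (h : w ∈ P.D v) : (P.D v).erase l ∩ P.D w = (P.D w).erase l := by
  ext x
  simp only [Finset.mem_inter, Finset.mem_erase]
  have : x ∈ P.D w → x ∈ P.D v := fun hx => P.D_subset h hx
  tauto

theorem good_leaf (v : V) (h : 2 ≤ (P.D v).card) : ∃ l ∈ P.D v, l ≠ v ∧ P.Leaf l ∧
    ∀ f, P.RIso ((P.D v).erase l) v ((P.D v).erase l) v f → f (P.p l) = P.p l := by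
  induction hn : (P.D v).card using Nat.strong_induction_on generalizing v with
  | _ n ih =>
    have hC : (Finset.univ.filter (fun w => P.p w = v ∧ w ≠ P.c)).Nonempty := by
      obtain ⟨x, hx, hxv⟩ := Finset.exists_mem_ne (by omega : 1 < (P.D v).card) v
      obtain ⟨w, h1, h2, h3⟩ := P.exists_child hx hxv
      exact ⟨w, by simp [h1, h2]⟩
    obtain ⟨w, hw, hmin⟩ := Finset.exists_min_image _ (fun w => (P.D w).card) hC
    simp only [Finset.mem_filter, Finset.mem_univ, true_and] at hw hmin
    obtain ⟨hwv, hwc⟩ := hw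
    have hwD := P.child_mem hwv
    have hvw : v ∉ P.D w := by rw [← hwv]; exact P.parent_not_mem hwc
    have hlt : (P.D w).card < (P.D v).card :=
      Finset.card_lt_card ⟨P.D_subset hwD, fun h => hvw (h (P.self_mem v))⟩
    by_cases h1 : (P.D w).card = 1
    · refine ⟨w, hwD, fun h => hvw (h ▸ P.self_mem w), ?_, ?_⟩
      · intro x hx
        have hxw : x = w := Finset.card_le_one.1 h1.le x (P.child_mem hx) w (P.self_mem w)
        rw [hxw] at hx
        exact P.p_ne hwc hx
      · intro f hf
        rw [hwv]; exact hf.2.1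
    · have hpos : 0 < (P.D w).card := Finset.card_pos.2 ⟨w, P.self_mem w⟩
      obtain ⟨l, hl, hlw, hleaf, hgood⟩ := ih _ (by omega) w (by omega) rfl
      have hlv : l ≠ v := by rintro rfl; exact hvw hl
      refine ⟨l, P.D_subset hwD hl, hlv, hleaf, ?_⟩
      intro f hf
      have hS := P.Sub_D_erase hleaf hlv.symm
      have hwS : w ∈ (P.D v).erase l := by simp [hwD, hlw.symm]
      have hwv' : w ≠ v := fun h => hvw (h ▸ P.self_mem w)
      have hpf : P.p (f w) = v := by rw [hf.2.2 w hwS hwv', hwv, hf.2.1]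
      have hfc : f w ≠ P.c := by
        intro h
        rw [h, P.p_c] at hpf
        apply hwv'
        apply hf.1.2.1 hwS hS.1
        rw [h, hf.2.1, hpf]
      have hr := hf.restrict hS hS hwS
      rw [P.erase_inter hwD, P.erase_inter (P.child_mem hpf)] at hr
      have hfw : f w = w := by
        by_contra hne
        have hlf : l ∉ P.D (f w) := fun h => hne (P.sib (by rw [hpf, hwv]) hfc hwc h hl)
        have h2 := hr.card
        rw [Finset.erase_eq_of_notMem hlf, Finset.card_erase_of_mem hl] at h2
        have := hmin (f w) ⟨hpf, hfc⟩
        omega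
      rw [hfw] at hr
      exact hgood f hr

section graph
variable {P} {G : SimpleGraph V}

theorem Fits.adj_p (hF : P.Fits G) {x : V} (hx : x ≠ P.c) : G.Adj x (P.p x) :=
  (hF _ _).2 ⟨(P.p_ne hx).symm, Or.inl rfl⟩

theorem inv_eq (hF : P.Fits G) (hAF : AutFree G) (g : V → V) (hg : ∀ x, g (g x) = x)
    (hadj : ∀ x, x ≠ P.c → G.Adj (g x) (g (P.p x))) : ∀ x, g x = x := by
  have key : ∀ x y, G.Adj x y → G.Adj (g x) (g y) := by
    intro x y h
    obtain ⟨h1, h2⟩ := (hF _ _).1 h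
    rcases h2 with h2 | h2
    · have hx : x ≠ P.c := by rintro rfl; rw [P.p_c] at h2; exact h1 h2
      rw [← h2]; exact hadj x hx
    · have hx : y ≠ P.c := by rintro rfl; rw [P.p_c] at h2; exact h1 h2.symm
      rw [← h2]; exact (hadj y hx).symm
  let φ : G ≃g G :=
    { toFun := g, invFun := g, left_inv := hg, right_inv := hg
      map_rel_iff' := by
        intro x y
        constructor
        · intro h
          have := key _ _ h
          change G.Adj (g (g x)) (g (g y)) at this
          rwa [hg, hg] at this
        · exact key x y }
  exact fun x => hAF φ x

theorem Leaf.isLeaf (hF : P.Fits G) {l : V} (hl : P.Leaf l) : IsLeaf G l := by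
  unfold IsLeaf
  rw [Set.ncard_eq_one]
  refine ⟨P.p l, ?_⟩
  ext x
  simp only [SimpleGraph.mem_neighborSet, Set.mem_singleton_iff]
  constructor
  · intro h
    rcases ((hF _ _).1 h).2 with h | h
    · exact h.symm
    · exact absurd h (hl x)
  · rintro rfl
    exact hF.adj_p hl.ne_c

/-- `f` is an automorphism of the graph with `l` deleted. -/
def Aut1 (G : SimpleGraph V) (l : V) (f : Equiv.Perm V) : Prop :=
  f l = l ∧ ∀ x y, x ≠ l → y ≠ l → (G.Adj (f x) (f y) ↔ G.Adj x y)

theorem del (hF : P.Fits G) (hAF : AutFree G) {l : V} (hl : P.Leaf l)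
    (h : ¬ AutFree (G.induce {x : V | x ≠ l})) :
    ∃ f, Aut1 G l f ∧ f (P.p l) ≠ P.p l := by
  unfold AutFree at h
  push Not at h
  obtain ⟨φ, v, hv⟩ := h
  let f : Equiv.Perm V := Equiv.Perm.ofSubtype (p := fun x => x ≠ l) φ.toEquiv
  have hfl : f l = l := Equiv.Perm.ofSubtype_apply_of_not_mem _ (by simp)
  have hf : ∀ x (hx : x ≠ l), f x = (φ ⟨x, hx⟩ : V) := by
    intro x hx
    exact Equiv.Perm.ofSubtype_apply_of_mem (p := fun x => x ≠ l) φ.toEquiv hx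
  have hA : ∀ x y, x ≠ l → y ≠ l → (G.Adj (f x) (f y) ↔ G.Adj x y) := by
    intro x y hx hy
    rw [hf x hx, hf y hy]
    exact φ.map_rel_iff' (a := ⟨x, hx⟩) (b := ⟨y, hy⟩)
  refine ⟨f, ⟨hfl, hA⟩, ?_⟩
  intro hp
  have hlx : ∀ x, G.Adj l x ↔ x = P.p l := by
    intro x
    constructor
    · intro h
      rcases ((hF _ _).1 h).2 with h | h
      · exact h.symm
      · exact absurd h (hl x)
    · rintro rfl
      exact hF.adj_p hl.ne_c
  have hpp : ∀ x, f x = P.p l ↔ x = P.p l := by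
    intro x
    constructor
    · intro h; exact f.injective (h.trans hp.symm)
    · rintro rfl; exact hp
  let ψ : G ≃g G :=
    { toEquiv := f
      map_rel_iff' := by
        intro x y
        by_cases hx : x = l
        · subst hx
          rw [hfl, hlx, hlx, hpp]
        · by_cases hy : y = l
          · subst hy
            rw [hfl, G.adj_comm, hlx, G.adj_comm, hlx, hpp]
          · exact hA x y hx hy }
  have := hAF ψ v.1
  have h2 : f v.1 = v.1 := this
  rw [hf v.1 v.2] at h2
  exact hv (Subtype.ext h2)

theorem commute_c (hF : P.Fits G) {l : V} (hl : P.Leaf l) {f : Equiv.Perm V} (hf : Aut1 G l f)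
    {A : Finset V} {a : V} (hA : P.Sub A a) (hlA : l ∉ A) (hfa : f a = P.c) :
    ∀ x ∈ A, x ≠ a → P.p (f x) = f (P.p x) := by
  intro x
  induction hn : P.d x using Nat.strong_induction_on generalizing x with
  | _ n ih =>
    intro hx hxa
    obtain ⟨h1, h2⟩ := hA.2 x hx hxa
    have hxc : x ≠ P.c := by rintro rfl; rw [P.dc] at h1; omega
    have h3 := P.d_p hxc
    have hxl : x ≠ l := by rintro rfl; exact hlA hx
    have h4 := (hf.2 x (P.p x) hxl (hl x)).2 (hF.adj_p hxc)
    obtain ⟨h5, h6⟩ := (hF _ _).1 h4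
    rcases h6 with h6 | h6
    · exact h6
    · exfalso
      by_cases h7 : P.p x = a
      · rw [h7, hfa, P.p_c, ← hfa] at h6
        exact hxa (f.injective h6).symm
      · rw [ih _ (by omega) _ rfl h2 h7] at h6
        have h8 := f.injective h6
        have h9 := P.hd (P.p x)
        rw [h8] at h9
        omega

theorem rooted (hF : P.Fits G) {l : V} (hl : P.Leaf l) {f : Equiv.Perm V} (hf : Aut1 G l f)
    (hfc : f P.c = P.c) : P.RIso (Finset.univ.erase l) P.c (Finset.univ.erase l) P.c f := by
  refine ⟨⟨?_, f.injective.injOn, ?_⟩, hfc, commute_c hF hl hf (P.Sub_univ_erase hl) (by simp) hfc⟩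
  · intro x hx
    simp only [Finset.coe_erase, Finset.coe_univ, Set.mem_sdiff, Set.mem_univ, true_and, Set.mem_singleton_iff] at hx ⊢
    intro h; exact hx (f.injective (h.trans hf.1.symm))
  · intro x hx
    simp only [Finset.coe_erase, Finset.coe_univ, Set.mem_sdiff, Set.mem_univ, true_and, Set.mem_singleton_iff] at hx
    refine ⟨f.symm x, ?_, by simp⟩
    simp only [Finset.coe_erase, Finset.coe_univ, Set.mem_sdiff, Set.mem_univ, true_and, Set.mem_singleton_iff]
    intro h
    apply hx
    rw [← f.apply_symm_apply x, h, hf.1]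

theorem cover (hF : P.Fits G) {l : V} (hl : P.Leaf l) {f : Equiv.Perm V} (hf : Aut1 G l f)
    {b' : V} (hb' : f b' = P.p (f P.c)) :
    ∀ z, z ≠ l → f z ∈ P.D (f P.c) ∨ z ∈ P.D b' := by
  intro z
  induction hn : P.d z using Nat.strong_induction_on generalizing z with
  | _ n ih =>
    intro hz
    by_cases hzc : z = P.c
    · left; rw [hzc]; exact P.self_mem _
    have h3 := P.d_p hzc
    rcases ih _ (by omega) _ rfl (hl z) with h | h
    · have h4 := (hf.2 z (P.p z) hz (hl z)).2 (hF.adj_p hzc)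
      obtain ⟨h5, h6⟩ := (hF _ _).1 h4
      rcases h6 with h6 | h6
      · left; apply P.step; rw [h6]; exact h
      · rcases P.cases_D h with h7 | h7
        · right
          rw [h7, ← hb'] at h6
          rw [← f.injective h6]; exact P.self_mem _
        · left; rw [← h6]; exact h7
    · right; exact P.step h

theorem centroid (hF : P.Fits G) {l : V} (hl : P.Leaf l) {f : Equiv.Perm V} (hf : Aut1 G l f)
    (hs : ∀ v, P.p v = P.c → v ≠ P.c → 2 * ((P.D v).erase l).card + 1 ≤ Fintype.card V) :
    f P.c = P.c ∨ ∃ b, P.p b = P.c ∧ b ≠ P.c ∧ b ≠ l ∧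
      2 * ((P.D b).erase l).card + 1 = Fintype.card V ∧
      P.RIso ((P.D b).erase l) b ((Finset.univ \ P.D b).erase l) P.c f := by
  by_cases hfc : f P.c = P.c
  · exact Or.inl hfc
  right
  set b' := f.symm (P.p (f P.c)) with hb'def
  have hb' : f b' = P.p (f P.c) := by simp [hb'def]
  have hcl := hl.ne_c.symm
  have hb'l : b' ≠ l := by intro h; rw [h, hf.1] at hb'; exact hl _ hb'.symm
  have hfl : ∀ x, x ≠ l → f x ≠ l := fun x hx h => hx (f.injective (h.trans hf.1.symm))
  have hadj : G.Adj b' P.c := by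
    rw [← hf.2 _ _ hb'l hcl, hb']; exact (hF.adj_p hfc).symm
  have hb'c : b' ≠ P.c := hadj.ne
  have hpb' : P.p b' = P.c := by
    rcases ((hF _ _).1 hadj).2 with h | h
    · exact h
    · rw [P.p_c] at h; exact absurd h.symm hb'c
  obtain ⟨b, hb, hbc, hfb⟩ := P.exists_child (P.mem_D_c (f P.c)) hfc
  have hcov := cover hF hl hf hb'
  have hcount : Fintype.card V ≤ ((P.D (f P.c)).erase l).card + ((P.D b').erase l).card + 1 := by
    have hsub : (Finset.univ : Finset V).erase l ⊆
        (((P.D (f P.c)).erase l).image f.symm) ∪ ((P.D b').erase l) := by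
      intro z hz
      have hz : z ≠ l := by simpa using hz
      rw [Finset.mem_union]
      rcases hcov z hz with h | h
      · left; rw [Finset.mem_image]
        exact ⟨f z, by simp [h, hfl z hz], by simp⟩
      · right; simp [h, hz]
    have h1 := Finset.card_le_card hsub
    have h2 := Finset.card_union_le (((P.D (f P.c)).erase l).image f.symm) ((P.D b').erase l)
    have h3 := Finset.card_image_le (s := (P.D (f P.c)).erase l) (f := f.symm)
    rw [Finset.card_erase_of_mem (Finset.mem_univ l), Finset.card_univ] at h1
    omega
  have s1 := hs b hb hbc
  have s2 := hs b' hpb' hb'c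
  have hle : ((P.D (f P.c)).erase l).card ≤ ((P.D b).erase l).card :=
    Finset.card_le_card (Finset.erase_subset_erase _ (P.D_subset hfb))
  have hbl : b ≠ l := by
    rintro rfl
    rcases P.cases_D (v := b) hfb with h | h
    · exact hfl _ hcl h
    · have h5 : P.p (f P.c) ∈ P.D b := h
      obtain h6 | ⟨w, h6, -, -⟩ := (Classical.em (P.p (f P.c) = b)).imp id (fun h' => P.exists_child h5 h')
      · exact hl _ h6
      · exact hl _ h6
  have hfcb : f P.c = b := by
    by_contra hne
    have : ((P.D (f P.c)).erase l).card < ((P.D b).erase l).card := by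
      apply Finset.card_lt_card
      refine ⟨Finset.erase_subset_erase _ (P.D_subset hfb), fun h => ?_⟩
      have h1 := h (Finset.mem_erase.2 ⟨hbl, P.self_mem b⟩)
      have h2 := P.d_le (Finset.mem_erase.1 h1).2
      exact hne (P.eq_of_d_le hfb h2)
    omega
  have hbb' : b' = b := by
    by_contra hne
    have hdis : Disjoint ((P.D b').erase l) ((P.D b).erase l) := by
      rw [Finset.disjoint_left]
      intro x hx hx2
      exact hne (P.sib (by rw [hpb', hb]) hb'c hbc (Finset.mem_erase.1 hx).2 (Finset.mem_erase.1 hx2).2)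
    have h1 := Finset.card_union_of_disjoint hdis
    have h2 : ((P.D b').erase l) ∪ ((P.D b).erase l) ⊆ (Finset.univ.erase l).erase P.c := by
      intro x hx
      have hcb : P.c ∉ P.D b := by rw [← hb]; exact P.parent_not_mem hbc
      have hcb' : P.c ∉ P.D b' := by rw [← hpb']; exact P.parent_not_mem hb'c
      simp only [Finset.mem_union, Finset.mem_erase, Finset.mem_univ, and_true] at hx ⊢
      refine ⟨?_, by tauto⟩
      rintro rfl; tauto
    have h3 := Finset.card_le_card h2
    rw [Finset.card_erase_of_mem (by simp [hcl]), Finset.card_erase_of_mem (Finset.mem_univ l), Finset.card_univ] at h3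
    rw [hfcb] at hcount
    have : 0 < ((P.D b).erase l).card := Finset.card_pos.2 ⟨b, by simp [hbl, P.self_mem]⟩
    omega
  rw [hbb'] at hb' hcov
  rw [hfcb] at hcov hcount hb'
  rw [hb] at hb'
  have hcardB : ((Finset.univ \ P.D b).erase l).card + ((P.D b).erase l).card + 1 = Fintype.card V := by
    have h1 : ((Finset.univ \ P.D b).erase l) ∪ ((P.D b).erase l) = Finset.univ.erase l := by
      ext x; simp only [Finset.mem_union, Finset.mem_erase, Finset.mem_sdiff, Finset.mem_univ, true_and, and_true]; tauto
    have h2 : Disjoint ((Finset.univ \ P.D b).erase l) ((P.D b).erase l) := by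
      rw [Finset.disjoint_left]; intro x hx hx2
      simp only [Finset.mem_erase, Finset.mem_sdiff, Finset.mem_univ, true_and] at hx hx2
      tauto
    rw [← Finset.card_union_of_disjoint h2, h1, Finset.card_erase_of_mem (Finset.mem_univ l), Finset.card_univ]
    have : 0 < Fintype.card V := Fintype.card_pos_iff.2 ⟨l⟩
    omega
  have hfin : 2 * ((P.D b).erase l).card + 1 = Fintype.card V := by
    rw [hbb'] at hcount; omega
  refine ⟨b, hb, hbc, hbl, hfin, ?_⟩
  have himg : ((Finset.univ \ P.D b).erase l).image f = (P.D b).erase l := by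
    apply Finset.eq_of_subset_of_card_le
    · intro y hy
      obtain ⟨x, hx, rfl⟩ := Finset.mem_image.1 hy
      simp only [Finset.mem_erase, Finset.mem_sdiff, Finset.mem_univ, true_and] at hx ⊢
      exact ⟨hfl x hx.1, (hcov x hx.1).resolve_right hx.2⟩
    · rw [Finset.card_image_of_injective _ f.injective]; omega
  have hmaps : ∀ x ∈ (P.D b).erase l, f x ∈ (Finset.univ \ P.D b).erase l := by
    intro x hx
    have hxl := (Finset.mem_erase.1 hx).1
    simp only [Finset.mem_erase, Finset.mem_sdiff, Finset.mem_univ, true_and]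
    refine ⟨hfl x hxl, fun h => ?_⟩
    have : f x ∈ ((Finset.univ \ P.D b).erase l).image f := by
      rw [himg]; simp [h, hfl x hxl]
    obtain ⟨y, hy, hyx⟩ := Finset.mem_image.1 this
    rw [f.injective hyx] at hy
    simp only [Finset.mem_erase, Finset.mem_sdiff, Finset.mem_univ, true_and] at hy hx
    exact hy.2 hx.2
  refine ⟨⟨fun x hx => hmaps x hx, f.injective.injOn, ?_⟩, hb',
    commute_c hF hl hf (P.Sub_D_erase hl hbl) (by simp) hb'⟩
  exact Finset.surjOn_of_injOn_of_card_le f (fun x hx => hmaps x hx) f.injective.injOn (by omega)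

theorem exists_par (hT : G.IsTree) (c : V) :
    ∃ P : Par V, P.c = c ∧ P.Fits G ∧ ∀ x, P.d x = G.dist c x := by
  have hconn := hT.1
  have ex : ∀ x, ∃ y, (x = c → y = c) ∧ (x ≠ c → G.Adj x y ∧ G.dist c y + 1 = G.dist c x) := by
    intro x
    by_cases hx : x = c
    · exact ⟨c, fun _ => rfl, fun h => absurd hx h⟩
    · obtain ⟨w, hw⟩ := hconn.exists_walk_length_eq_dist x c
      cases w with
      | nil => exact absurd rfl hx
      | cons h w' =>
        rename_i y
        refine ⟨y, fun h => absurd h hx, fun _ => ⟨h, ?_⟩⟩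
        rw [SimpleGraph.Walk.length_cons] at hw
        have h1 := SimpleGraph.dist_le w'
        have h2 := hconn.dist_triangle (u := x) (v := y) (w := c)
        rw [SimpleGraph.dist_eq_one_iff_adj.2 h] at h2
        rw [SimpleGraph.dist_comm (u := c) (v := y), SimpleGraph.dist_comm (u := c) (v := x)]
        omega
  choose p hp1 hp2 using ex
  let P : Par V :=
    { p := p, d := fun x => G.dist c x, c := c
      hd := by
        intro x
        by_cases hx : x = c
        · rw [hp1 x hx, hx]; simp
        · have := (hp2 x hx).2; omega
      hc := by
        intro x hx
        exact ((hconn.dist_eq_zero_iff).1 hx).symm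
      dc := by simp }
  refine ⟨P, rfl, ?_, fun x => rfl⟩
  have inj : Set.InjOn (fun x => s(x, p x)) ((Finset.univ.erase c : Finset V) : Set V) := by
    intro x hx y hy hxy
    have hx : x ≠ c := by simpa using hx
    have hy : y ≠ c := by simpa using hy
    simp only [Sym2.eq_iff] at hxy
    rcases hxy with h | h
    · exact h.1
    · have h1 := (hp2 x hx).2
      have h2 := (hp2 y hy).2
      rw [h.2] at h1
      rw [← h.1] at h2
      omega
  have himg : (Finset.univ.erase c).image (fun x => s(x, p x)) = G.edgeFinset := by
    apply Finset.eq_of_subset_of_card_le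
    · intro e he
      obtain ⟨x, hx, rfl⟩ := Finset.mem_image.1 he
      have hx : x ≠ c := by simpa using hx
      rw [SimpleGraph.mem_edgeFinset, SimpleGraph.mem_edgeSet]
      exact (hp2 x hx).1
    · rw [Finset.card_image_of_injOn inj, Finset.card_erase_of_mem (Finset.mem_univ c), Finset.card_univ]
      have := hT.card_edgeFinset
      omega
  intro x y
  constructor
  · intro h
    refine ⟨h.ne, ?_⟩
    have : s(x, y) ∈ (Finset.univ.erase c).image (fun x => s(x, p x)) := by
      rw [himg, SimpleGraph.mem_edgeFinset]; exact h
    obtain ⟨z, hz, hz2⟩ := Finset.mem_image.1 this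
    simp only [Sym2.eq_iff] at hz2
    rcases hz2 with ⟨h1, h2⟩ | ⟨h1, h2⟩
    · left; rw [← h1]; exact h2
    · right; rw [← h1]; exact h2
  · rintro ⟨h1, h2⟩
    rcases h2 with h2 | h2
    · have hx : x ≠ c := by
        rintro rfl
        exact h1 ((hp1 x rfl).symm.trans h2)
      rw [← h2]; exact (hp2 x hx).1
    · have hx : y ≠ c := by
        rintro rfl
        exact h1 ((hp1 y rfl).symm.trans h2).symm
      rw [← h2]; exact (hp2 y hx).1.symm

theorem exists_centroid (hT : G.IsTree) : ∃ P : Par V, P.Fits G ∧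
    ∀ v, P.p v = P.c → v ≠ P.c → 2 * (P.D v).card ≤ Fintype.card V := by
  have := hT.1.nonempty
  obtain ⟨c, -, hmin⟩ := Finset.exists_min_image (Finset.univ : Finset V)
    (fun v => ∑ x, G.dist v x) Finset.univ_nonempty
  obtain ⟨P, hPc, hF, hd⟩ := exists_par hT c
  refine ⟨P, hF, ?_⟩
  intro b hb hbc
  have h1 := hmin b (Finset.mem_univ b)
  have hdesc : ∀ x ∈ P.D b, G.dist b x + 1 ≤ G.dist c x := by
    intro x
    induction hn : P.d x using Nat.strong_induction_on generalizing x with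
    | _ n ih =>
      intro hx
      by_cases hxb : x = b
      · have h3 := P.d_pos hbc
        rw [hd, ← hxb] at h3
        rw [hxb] at h3 ⊢
        simp only [SimpleGraph.dist_self]; omega
      · have h2 := (P.cases_D hx).resolve_left hxb
        have h3 := P.d_lt hx hxb
        have hxc : x ≠ P.c := by rintro rfl; rw [P.dc] at h3; omega
        have h4 := P.d_p hxc
        have h5 := ih _ (by omega) _ rfl h2
        have h6 := hT.1.dist_triangle (u := b) (v := P.p x) (w := x)
        rw [SimpleGraph.dist_eq_one_iff_adj.2 (hF.adj_p hxc).symm] at h6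
        rw [hd, hd] at h4
        omega
  have hother : ∀ x, G.dist b x ≤ G.dist c x + 1 := by
    intro x
    have h6 := hT.1.dist_triangle (u := b) (v := c) (w := x)
    have : G.Adj b c := by rw [← hPc, ← hb]; exact hF.adj_p hbc
    rw [SimpleGraph.dist_eq_one_iff_adj.2 this] at h6
    omega
  have h2 : ∑ x, (G.dist b x + 2 * (if x ∈ P.D b then 1 else 0)) ≤ ∑ x, (G.dist c x + 1) := by
    apply Finset.sum_le_sum
    intro x _
    split_ifs with h
    · have := hdesc x h; omega
    · have := hother x; omega
  rw [Finset.sum_add_distrib, Finset.sum_add_distrib, ← Finset.mul_sum, Finset.sum_boole] at h2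
  simp only [Finset.sum_const, Finset.card_univ, smul_eq_mul, mul_one, Finset.filter_univ_mem, Nat.cast_id] at h2
  omega

theorem dele (hF : P.Fits G) (hAF : AutFree G)
    (hmin : ∀ l : V, IsLeaf G l → ¬ AutFree (G.induce {x : V | x ≠ l})) {l : V} (hl : P.Leaf l)
    (hs : ∀ v, P.p v = P.c → v ≠ P.c → 2 * ((P.D v).erase l).card + 1 ≤ Fintype.card V) :
    ∃ f : V → V, f (P.p l) ≠ P.p l ∧
      (P.RIso (Finset.univ.erase l) P.c (Finset.univ.erase l) P.c f ∨
      ∃ b, P.p b = P.c ∧ b ≠ P.c ∧ b ≠ l ∧ 2 * ((P.D b).erase l).card + 1 = Fintype.card V ∧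
      P.RIso ((P.D b).erase l) b ((Finset.univ \ P.D b).erase l) P.c f) := by
  obtain ⟨f, hf, hne⟩ := del hF hAF hl (hmin l (hl.isLeaf hF))
  refine ⟨f, hne, ?_⟩
  rcases centroid hF hl hf hs with h | h
  · exact Or.inl (rooted hF hl hf h)
  · exact Or.inr h

theorem rooted_child {l : V} (hl : P.Leaf l) {f : V → V}
    (hf : P.RIso (Finset.univ.erase l) P.c (Finset.univ.erase l) P.c f) {v : V}
    (hv : P.p v = P.c) (hvc : v ≠ P.c) (hvl : v ≠ l) :
    P.p (f v) = P.c ∧ f v ≠ P.c ∧ f v ≠ l ∧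
      P.RIso ((P.D v).erase l) v ((P.D (f v)).erase l) (f v) f := by
  have hS := P.Sub_univ_erase hl
  have hvS : v ∈ Finset.univ.erase l := by simp [hvl]
  have h1 : ∀ w, Finset.univ.erase l ∩ P.D w = (P.D w).erase l := by
    intro w; ext x; simp
  have hr := hf.restrict hS hS hvS
  rw [h1, h1] at hr
  refine ⟨?_, ?_, ?_, hr⟩
  · rw [hf.2.2 v hvS hvc, hv, hf.2.1]
  · intro h
    exact hvc (hf.1.2.1 hvS hS.1 (by rw [h, hf.2.1]))
  · have := hf.1.1 hvS
    simpa using this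

theorem W_cons {X B : Finset V} {b : V} {k : ℕ} (hX : ∀ x ∈ X, x ≠ P.c → x ∈ B)
    (hb : P.d b = 1) (hW : P.W B b k) : P.W X P.c (k + 1) := by
  intro x hx y hy hxy hd
  by_cases hxc : x = P.c
  · rw [hxc, P.dc] at hxy
    rw [hxc, P.hc y hxy.symm]
  · have hyc : y ≠ P.c := by
      rintro rfl
      rw [P.dc] at hxy
      exact hxc (P.hc x hxy)
    rw [P.dc] at hd
    exact hW x (hX x hx hxc) y (hX y hy hyc) hxy (by omega)

theorem d_child {b : V} (hb : P.p b = P.c) (hbc : b ≠ P.c) : P.d b = 1 := by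
  have := P.d_p hbc
  rw [hb, P.dc] at this; omega

theorem c_not_mem {b : V} (hbc : b ≠ P.c) : P.c ∉ P.D b := by
  intro h
  have := P.d_le h
  have := P.d_pos hbc
  have := P.dc
  omega

theorem swap_map {A B : Finset V} {f : V → V} (hf : Set.BijOn f A B) (hd : Disjoint A B) :
    ∃ g : V → V, (∀ x, g (g x) = x) ∧ (∀ x ∈ A, g x = f x) ∧ (∀ x ∈ A, g (f x) = x) ∧
      (∀ x, x ∉ A → x ∉ B → g x = x) := by
  have ex : ∀ x, ∃ y, (x ∈ A → y = f x) ∧ (x ∈ B → y ∈ A ∧ f y = x) ∧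
      (x ∉ A → x ∉ B → y = x) := by
    intro x
    by_cases hA : x ∈ A
    · have hB := Finset.disjoint_left.1 hd hA
      exact ⟨f x, fun _ => rfl, fun h => absurd h hB, fun h => absurd hA h⟩
    · by_cases hB : x ∈ B
      · obtain ⟨y, hy, hyx⟩ := hf.2.2 hB
        exact ⟨y, fun h => absurd h hA, fun _ => ⟨hy, hyx⟩, fun _ h => absurd hB h⟩
      · exact ⟨x, fun h => absurd h hA, fun h => absurd h hB, fun _ _ => rfl⟩
  choose g h1 h2 h3 using ex
  have h4 : ∀ x ∈ A, g (f x) = x := by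
    intro x hx
    have := h2 (f x) (hf.1 hx)
    exact hf.2.1 this.1 hx this.2
  refine ⟨g, ?_, h1, h4, h3⟩
  intro x
  by_cases hA : x ∈ A
  · rw [h1 x hA, h4 x hA]
  · by_cases hB : x ∈ B
    · have := h2 x hB
      rw [h1 _ this.1, this.2]
    · rw [h3 x hA hB, h3 x hA hB]

theorem no_swap_sib (hF : P.Fits G) (hAF : AutFree G) {u v : V} (huv : u ≠ v) (hu : P.p u = P.c)
    (huc : u ≠ P.c) (hv : P.p v = P.c) (hvc : v ≠ P.c) {f : V → V}
    (hf : P.RIso (P.D u) u (P.D v) v f) : False := by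
  have hdis : Disjoint (P.D u) (P.D v) := by
    rw [Finset.disjoint_left]
    intro x h1 h2
    exact huv (P.sib (by rw [hu, hv]) huc hvc h1 h2)
  obtain ⟨g, hgg, g1, g2, g3⟩ := swap_map hf.1 hdis
  have hgc : g P.c = P.c := g3 _ (c_not_mem huc) (c_not_mem hvc)
  have hgu : g u = v := by rw [g1 u (P.self_mem u), hf.2.1]
  have := inv_eq hF hAF g hgg (by
    intro x hx
    by_cases hxu : x ∈ P.D u
    · by_cases h : x = u
      · rw [h, hu, hgc, hgu, ← hv]; exact hF.adj_p hvc
      · have hp := (P.cases_D hxu).resolve_left h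
        rw [g1 x hxu, g1 _ hp, ← hf.2.2 x hxu h]
        apply hF.adj_p
        intro h'
        have := hf.1.1 hxu
        rw [h'] at this
        exact c_not_mem hvc this
    · by_cases hxv : x ∈ P.D v
      · obtain ⟨y, hy, rfl⟩ := hf.1.2.2 hxv
        have hyc : y ≠ P.c := by rintro rfl; exact c_not_mem huc hy
        rw [g2 y hy]
        by_cases h : y = u
        · rw [h, hf.2.1, hv, hgc, ← hu]; exact hF.adj_p huc
        · have hp := (P.cases_D hy).resolve_left h
          rw [hf.2.2 y hy h, g2 _ hp]
          exact hF.adj_p hyc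
      · rw [g3 x hxu hxv, g3 _ (fun h => hxu (P.step h)) (fun h => hxv (P.step h))]
        exact hF.adj_p hx) u
  exact huv (this.symm.trans hgu)

theorem no_swap_edge (hF : P.Fits G) (hAF : AutFree G) {b : V} (hb : P.p b = P.c)
    (hbc : b ≠ P.c) {f : V → V}
    (hf : P.RIso (Finset.univ \ P.D b) P.c (P.D b) b f) : False := by
  have hdis : Disjoint (Finset.univ \ P.D b) (P.D b) := Finset.sdiff_disjoint
  have hS := P.Sub_compl hbc
  obtain ⟨g, hgg, g1, g2, g3⟩ := swap_map hf.1 hdis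
  have hgc : g P.c = b := by rw [g1 _ hS.1, hf.2.1]
  have := inv_eq hF hAF g hgg (by
    intro x hx
    by_cases hxb : x ∈ P.D b
    · obtain ⟨y, hy, rfl⟩ := hf.1.2.2 hxb
      rw [g2 y hy]
      by_cases h : y = P.c
      · rw [h, hf.2.1, hb, hgc, ← hb]; exact (hF.adj_p hbc).symm
      · rw [hf.2.2 y hy h, g2 _ (hS.2 y hy h).2]
        exact hF.adj_p h
    · have hxA : x ∈ Finset.univ \ P.D b := by simp [hxb]
      rw [g1 x hxA, g1 _ (hS.2 x hxA hx).2, ← hf.2.2 x hxA hx]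
      apply hF.adj_p
      intro h'
      have := hf.1.1 hxA
      rw [h'] at this
      exact c_not_mem hbc this) P.c
  exact hbc (hgc.symm.trans this)

theorem card_compl (b : V) : (Finset.univ \ P.D b).card + (P.D b).card = Fintype.card V := by
  rw [Finset.card_sdiff_add_card_eq_card (Finset.subset_univ _), Finset.card_univ]

theorem D_card_pos (b : V) : 0 < (P.D b).card := Finset.card_pos.2 ⟨b, P.self_mem b⟩

theorem sub_compl_erase {v b : V} (hne : v ≠ b) (hv : P.p v = P.c)
    (hvc : v ≠ P.c) (hb : P.p b = P.c) (hbc : b ≠ P.c) :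
    P.D v ⊆ (Finset.univ \ P.D b).erase P.c := by
  intro x hx
  simp only [Finset.mem_erase, Finset.mem_sdiff, Finset.mem_univ, true_and]
  constructor
  · rintro rfl; exact c_not_mem hvc hx
  · intro h; exact hne (P.sib (by rw [hv, hb]) hvc hbc hx h)

theorem card_compl_erase {b : V} (hbc : b ≠ P.c) :
    ((Finset.univ \ P.D b).erase P.c).card + (P.D b).card + 1 = Fintype.card V := by
  have h1 := (P.Sub_compl hbc).1
  have h2 := card_compl (P := P) b
  have h3 := Finset.card_pos.2 ⟨_, h1⟩
  rw [Finset.card_erase_of_mem h1]; omega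

theorem two {v b : V} (hne : v ≠ b) (hv : P.p v = P.c)
    (hvc : v ≠ P.c) (hb : P.p b = P.c) (hbc : b ≠ P.c) :
    (P.D v).card + (P.D b).card + 1 ≤ Fintype.card V := by
  have h1 := Finset.card_le_card (sub_compl_erase hne hv hvc hb hbc)
  have h2 := card_compl_erase (P := P) hbc
  omega

theorem three {u v w : V} (huv : u ≠ v) (huw : u ≠ w) (hvw : v ≠ w) (hu : P.p u = P.c)
    (huc : u ≠ P.c) (hv : P.p v = P.c) (hvc : v ≠ P.c) (hw : P.p w = P.c) (hwc : w ≠ P.c) :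
    (P.D u).card + (P.D v).card + (P.D w).card + 1 ≤ Fintype.card V := by
  have hdis : Disjoint (P.D u) (P.D v) := by
    rw [Finset.disjoint_left]
    intro x h1 h2
    exact huv (P.sib (by rw [hu, hv]) huc hvc h1 h2)
  have h1 := Finset.card_le_card (Finset.union_subset (sub_compl_erase huw hu huc hw hwc)
    (sub_compl_erase hvw hv hvc hw hwc))
  rw [Finset.card_union_of_disjoint hdis] at h1
  have h2 := card_compl_erase (P := P) hwc
  omega

theorem card_erase_le' (v l : V) : ((P.D v).erase l).card ≤ (P.D v).card := Finset.card_erase_le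

theorem case1 (hF : P.Fits G) (hAF : AutFree G)
    (hmin : ∀ l : V, IsLeaf G l → ¬ AutFree (G.induce {x : V | x ≠ l})) {b : V}
    (hb : P.p b = P.c) (hbc : b ≠ P.c) (hn : 2 * (P.D b).card = Fintype.card V) {k : ℕ}
    (hA : ¬ P.W (Finset.univ \ P.D b) P.c (k + 1)) (hB : P.W (P.D b) b k) : False := by
  have hcc := card_compl (P := P) b
  have hge : 2 ≤ (P.D b).card := by
    by_contra hlt
    apply hA
    intro x hx y hy _ _
    exact Finset.card_le_one.1 (by omega) x hx y hy
  obtain ⟨l, hlb, hne, hl, hgood⟩ := P.good_leaf b hge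
  have hbl : ((P.D b).erase l).card + 1 = (P.D b).card := by
    rw [Finset.card_erase_of_mem hlb]; omega
  obtain ⟨f, hfne, hf⟩ := dele hF hAF hmin hl (by
    intro v hv hvc
    by_cases hvb : v = b
    · rw [hvb]; omega
    · have := two hvb hv hvc hb hbc
      have := card_erase_le' (P := P) v l
      omega)
  rcases hf with hf | ⟨b', -, -, -, h, -⟩
  · obtain ⟨h1, h2, h3, h4⟩ := rooted_child hl hf hb hbc hne.symm
    by_cases hfb : f b = b
    · rw [hfb] at h4
      exact hfne (hgood f h4)
    · have hlf : l ∉ P.D (f b) := fun h => hfb (P.sib (by rw [h1, hb]) h2 hbc h hlb)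
      have h5 := h4.card
      rw [Finset.erase_eq_of_notMem hlf] at h5 h4
      have h6 : P.D (f b) = (Finset.univ \ P.D b).erase P.c := by
        apply Finset.eq_of_subset_of_card_le (sub_compl_erase hfb h1 h2 hb hbc)
        have := card_compl_erase (P := P) hbc
        omega
      apply hA
      apply W_cons (B := P.D (f b)) (b := f b) _ (d_child h1 h2)
      · exact h4.W_right (P.Sub_D_erase hl hne.symm) (P.Sub_D _)
          (W_mono (Finset.erase_subset _ _) hB)
      · intro x hx hxc
        rw [h6]; simp only [Finset.mem_erase]; exact ⟨hxc, hx⟩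
  · omega

theorem reroot (hF : P.Fits G) {b : V} (hb : P.p b = P.c) (hbc : b ≠ P.c) :
    ∃ P' : Par V, P'.Fits G ∧ P'.c = b ∧ P'.p P.c = b ∧ P'.D P.c = Finset.univ \ P.D b ∧
      (∀ k, P'.W (P.D b) b k ↔ P.W (P.D b) b k) ∧
      (∀ k, P'.W (Finset.univ \ P.D b) P.c k ↔ P.W (Finset.univ \ P.D b) P.c k) := by
  have hcD := c_not_mem (P := P) hbc
  have hbD := P.self_mem b
  have hdb := d_child hb hbc
  have hdc := P.dc
  let p' : V → V := fun x => if x = b then b else if x = P.c then b else P.p x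
  let d' : V → ℕ := fun x => if x ∈ P.D b then P.d x - 1 else P.d x + 1
  have p'b : p' b = b := by simp [p']
  have p'c : p' P.c = b := by simp [p']
  have p'o : ∀ x, x ≠ b → x ≠ P.c → p' x = P.p x := by
    intro x h1 h2; simp [p', h1, h2]
  have d1 : ∀ x, x ∈ P.D b → d' x = P.d x - 1 := by intro x h; simp [d', h]
  have d2 : ∀ x, x ∉ P.D b → d' x = P.d x + 1 := by intro x h; simp [d', h]
  let P' : Par V :=
    { p := p', d := d', c := b
      hd := by
        intro x
        by_cases hxb : x = b
        · rw [hxb, p'b, d1 b hbD]; omega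
        by_cases hxc : x = P.c
        · rw [hxc, p'c, d1 b hbD, d2 _ hcD]; omega
        rw [p'o x hxb hxc]
        have h3 := P.d_p hxc
        by_cases hx : x ∈ P.D b
        · have h4 := (P.cases_D hx).resolve_left hxb
          rw [d1 _ h4, d1 _ hx]; omega
        · rw [d2 _ (fun h => hx (P.step h)), d2 _ hx]; omega
      hc := by
        intro x hx
        by_cases hxD : x ∈ P.D b
        · rw [d1 x hxD] at hx
          exact P.eq_of_d_le hxD (by omega)
        · rw [d2 x hxD] at hx; omega
      dc := by rw [d1 b hbD]; omega }
  refine ⟨P', ?_, rfl, p'c, ?_, ?_, ?_⟩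
  · intro x y
    rw [hF]
    change _ ↔ x ≠ y ∧ (p' x = y ∨ p' y = x)
    have key : ∀ x y : V, x ≠ y → (P.p x = y → p' x = y ∨ p' y = x) := by
      intro x y hxy h
      by_cases hxb : x = b
      · right; rw [← h, hxb, hb, p'c]
      by_cases hxc : x = P.c
      · rw [hxc, P.p_c] at h; exact absurd (hxc.trans h) hxy
      left; rw [p'o x hxb hxc, h]
    have key2 : ∀ x y : V, x ≠ y → (p' x = y → P.p x = y ∨ P.p y = x) := by
      intro x y hxy h
      by_cases hxb : x = b
      · rw [hxb, p'b] at h; exact absurd (hxb.trans h) hxy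
      by_cases hxc : x = P.c
      · right; rw [← h, hxc, p'c, hb]
      left; rw [← p'o x hxb hxc, h]
    constructor
    · rintro ⟨h1, h2 | h2⟩
      · exact ⟨h1, key x y h1 h2⟩
      · exact ⟨h1, (key y x h1.symm h2).symm⟩
    · rintro ⟨h1, h2 | h2⟩
      · exact ⟨h1, key2 x y h1 h2⟩
      · exact ⟨h1, (key2 y x h1.symm h2).symm⟩
  · have hstep : ∀ x, P'.p x = p' x := fun _ => rfl
    ext x
    simp only [Finset.mem_sdiff, Finset.mem_univ, true_and]
    induction hn : P.d x using Nat.strong_induction_on generalizing x with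
    | _ n ih =>
      by_cases hxc : x = P.c
      · rw [hxc]; simp [hcD, P'.self_mem]
      have h3 := P.d_p hxc
      by_cases hxb : x = b
      · rw [hxb]
        simp only [hbD, not_true_eq_false, iff_false]
        exact c_not_mem (P := P') (b := P.c) hbc.symm
      have h4 := ih _ (by omega) (P.p x) rfl
      constructor
      · intro h5 h6
        have h7 := (P'.cases_D h5).resolve_left hxc
        rw [hstep, p'o x hxb hxc] at h7
        exact h4.1 h7 ((P.cases_D h6).resolve_left hxb)
      · intro h5
        apply P'.step
        rw [hstep, p'o x hxb hxc]
        exact h4.2 (fun h => h5 (P.step h))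
  · intro k
    have e : ∀ x, P'.d x = d' x := fun _ => rfl
    constructor
    · intro h x hx y hy hxy hd
      have := P.d_le hx
      have := P.d_le hy
      apply h x hx y hy
      · rw [e, e, d1 x hx, d1 y hy]; omega
      · rw [e, e, d1 x hx, d1 b hbD]; omega
    · intro h x hx y hy hxy hd
      have := P.d_le hx
      have := P.d_le hy
      rw [e, e, d1 x hx, d1 y hy] at hxy
      rw [e, e, d1 x hx, d1 b hbD] at hd
      exact h x hx y hy (by omega) (by omega)
  · intro k
    have e : ∀ x, P'.d x = d' x := fun _ => rfl
    constructor
    · intro h x hx y hy hxy hd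
      have hx' : x ∉ P.D b := by simpa using hx
      have hy' : y ∉ P.D b := by simpa using hy
      apply h x hx y hy
      · rw [e, e, d2 x hx', d2 y hy']; omega
      · rw [e, e, d2 x hx', d2 _ hcD]; omega
    · intro h x hx y hy hxy hd
      have hx' : x ∉ P.D b := by simpa using hx
      have hy' : y ∉ P.D b := by simpa using hy
      rw [e, e, d2 x hx', d2 y hy'] at hxy
      rw [e, e, d2 x hx', d2 _ hcD] at hd
      exact h x hx y hy (by omega) (by omega)

theorem find_level {A B : Finset V} {a b : V} (hA : P.Sub A a) (hB : P.Sub B b)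
    (h : ¬ ((∀ k, P.W A a k) ∧ (∀ k, P.W B b k))) :
    ∃ k, (¬ P.W A a (k + 1) ∧ P.W B b k) ∨ (¬ P.W B b (k + 1) ∧ P.W A a k) := by
  have ex : ∃ k, ¬ (P.W A a k ∧ P.W B b k) := by
    by_contra h'
    push Not at h'
    exact h ⟨fun k => (h' k).1, fun k => (h' k).2⟩
  have h1 := Nat.find_spec ex
  have h2 : ∀ m < Nat.find ex, (P.W A a m ∧ P.W B b m) := fun m hm => by
    have := Nat.find_min ex hm
    tauto
  generalize Nat.find ex = k at h1 h2
  cases k with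
  | zero => exact absurd ⟨W_zero hA, W_zero hB⟩ h1
  | succ k =>
    have := h2 k (by omega)
    refine ⟨k, ?_⟩
    tauto

theorem case1' (hF : P.Fits G) (hAF : AutFree G)
    (hmin : ∀ l : V, IsLeaf G l → ¬ AutFree (G.induce {x : V | x ≠ l})) {b : V}
    (hb : P.p b = P.c) (hbc : b ≠ P.c) (hn : 2 * (P.D b).card = Fintype.card V) : False := by
  have hcc := card_compl (P := P) b
  by_cases h : (∀ k, P.W (Finset.univ \ P.D b) P.c k) ∧ (∀ k, P.W (P.D b) b k)
  · obtain ⟨f, hf⟩ := path_iso (P.Sub_compl hbc) (P.Sub_D b) h.1 h.2 (by omega)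
    exact no_swap_edge hF hAF hb hbc hf
  · obtain ⟨k, ⟨h1, h2⟩ | ⟨h1, h2⟩⟩ := find_level (P.Sub_compl hbc) (P.Sub_D b) h
    · exact case1 hF hAF hmin hb hbc hn h1 h2
    · obtain ⟨P', hF', hc', hp', hD', hW1, hW2⟩ := reroot hF hb hbc
      have e : Finset.univ \ P'.D P.c = P.D b := by
        rw [hD']; simp
      refine case1 (P := P') hF' hAF hmin (b := P.c) (by rw [hp', hc']) (by rw [hc']; exact hbc.symm)
        (by rw [hD']; omega) (k := k) ?_ ?_
      · rw [e, hc', hW1]; exact h1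
      · rw [hD', hW2]; exact h2

theorem case2 (hF : P.Fits G) (hAF : AutFree G)
    (hmin : ∀ l : V, IsLeaf G l → ¬ AutFree (G.induce {x : V | x ≠ l})) {b₁ b₂ : V}
    (h12 : b₁ ≠ b₂) (hb₁ : P.p b₁ = P.c) (hbc₁ : b₁ ≠ P.c) (hb₂ : P.p b₂ = P.c) (hbc₂ : b₂ ≠ P.c)
    (hn₁ : 2 * (P.D b₁).card + 1 = Fintype.card V) (hn₂ : 2 * (P.D b₂).card + 1 = Fintype.card V)
    {k : ℕ} (hA : ¬ P.W (P.D b₁) b₁ (k + 1)) (hB : P.W (P.D b₂) b₂ k) : False := by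
  have hge : 2 ≤ (P.D b₂).card := by
    by_contra hlt
    apply hA
    intro x hx y hy _ _
    exact Finset.card_le_one.1 (by omega) x hx y hy
  obtain ⟨l, hlb, hne, hl, hgood⟩ := P.good_leaf b₂ hge
  have hlb1 : l ∉ P.D b₁ := fun h => h12 (P.sib (by rw [hb₁, hb₂]) hbc₁ hbc₂ h hlb)
  have hbl : ((P.D b₂).erase l).card + 1 = (P.D b₂).card := by
    rw [Finset.card_erase_of_mem hlb]; omega
  have only : ∀ v, P.p v = P.c → v ≠ P.c → v = b₁ ∨ v = b₂ := by
    intro v hv hvc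
    by_contra hcon
    push Not at hcon
    have h1 := three hcon.1 hcon.2 h12 hv hvc hb₁ hbc₁ hb₂ hbc₂
    have h2 := D_card_pos (P := P) v
    omega
  obtain ⟨f, hfne, hf⟩ := dele hF hAF hmin hl (by
    intro v hv hvc
    have := card_erase_le' (P := P) v l
    rcases only v hv hvc with h | h <;> subst h <;> omega)
  rcases hf with hf | ⟨b, hb, hbc, -, h, hf⟩
  · obtain ⟨h1, h2, h3, h4⟩ := rooted_child hl hf hb₂ hbc₂ hne.symm
    rcases only _ h1 h2 with h | h
    · rw [h] at h4
      have := h4.card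
      rw [Finset.erase_eq_of_notMem hlb1] at this
      omega
    · rw [h] at h4
      exact hfne (hgood f h4)
  · rcases only b hb hbc with h' | h'
    · subst h'
      rw [Finset.erase_eq_of_notMem hlb1] at hf
      apply hA
      refine hf.W_left (P.Sub_D b) (P.Sub_erase hl hl.ne_c.symm (P.Sub_compl hbc)) ?_
      apply W_cons (B := P.D b₂) (b := b₂) _ (d_child hb₂ hbc₂) hB
      intro x hx hxc
      obtain ⟨w, hw1, hw2, hw3⟩ := P.exists_child (P.mem_D_c x) hxc
      rcases only w hw1 hw2 with h' | h'
      · rw [h'] at hw3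
        simp only [Finset.mem_erase, Finset.mem_sdiff, Finset.mem_univ, true_and] at hx
        exact absurd hw3 hx.2
      · rw [← h']; exact hw3
    · rw [h'] at h; omega

theorem case2' (hF : P.Fits G) (hAF : AutFree G)
    (hmin : ∀ l : V, IsLeaf G l → ¬ AutFree (G.induce {x : V | x ≠ l})) {b₁ b₂ : V}
    (h12 : b₁ ≠ b₂) (hb₁ : P.p b₁ = P.c) (hbc₁ : b₁ ≠ P.c) (hb₂ : P.p b₂ = P.c) (hbc₂ : b₂ ≠ P.c)
    (hn₁ : 2 * (P.D b₁).card + 1 = Fintype.card V) (hn₂ : 2 * (P.D b₂).card + 1 = Fintype.card V) :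
    False := by
  by_cases h : (∀ k, P.W (P.D b₁) b₁ k) ∧ (∀ k, P.W (P.D b₂) b₂ k)
  · obtain ⟨f, hf⟩ := path_iso (P.Sub_D b₁) (P.Sub_D b₂) h.1 h.2 (by omega)
    exact no_swap_sib hF hAF h12 hb₁ hbc₁ hb₂ hbc₂ hf
  · obtain ⟨k, ⟨h1, h2⟩ | ⟨h1, h2⟩⟩ := find_level (P.Sub_D b₁) (P.Sub_D b₂) h
    · exact case2 hF hAF hmin h12 hb₁ hbc₁ hb₂ hbc₂ hn₁ hn₂ h1 h2
    · exact case2 hF hAF hmin h12.symm hb₂ hbc₂ hb₁ hbc₁ hn₂ hn₁ h1 h2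

theorem E7_adj : ∀ i j : Fin 7, (i ≠ j ∧
    ((![0, 0, 0, 2, 0, 4, 5] : Fin 7 → Fin 7) i = j ∨
      (![0, 0, 0, 2, 0, 4, 5] : Fin 7 → Fin 7) j = i)) ↔ E7.Adj i j := by
  unfold E7
  simp only [SimpleGraph.fromEdgeSet_adj, Set.mem_insert_iff, Set.mem_singleton_iff]
  decide

set_option maxHeartbeats 1000000 in
theorem isoE7 (hF : P.Fits G) {b₁ b₂ b₃ : V} (h12 : b₁ ≠ b₂) (h13 : b₁ ≠ b₃) (h23 : b₂ ≠ b₃)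
    (hb₁ : P.p b₁ = P.c) (hbc₁ : b₁ ≠ P.c) (hb₂ : P.p b₂ = P.c) (hbc₂ : b₂ ≠ P.c)
    (hb₃ : P.p b₃ = P.c) (hbc₃ : b₃ ≠ P.c) (hn : Fintype.card V = 7) (h1 : (P.D b₁).card = 3)
    (h2 : (P.D b₂).card = 2) (hW : ∀ k, P.W (P.D b₁) b₁ k) (hW2 : ∀ k, P.W (P.D b₂) b₂ k) :
    Nonempty (G ≃g E7) := by
  have e1 := image_eq_range (P.Sub_D b₁) hW
  have e2 := image_eq_range (P.Sub_D b₂) hW2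
  rw [h1] at e1
  rw [h2] at e2
  have d0 := P.dc
  have d1 := d_child hb₁ hbc₁
  have d2 := d_child hb₂ hbc₂
  have d3 := d_child hb₃ hbc₃
  obtain ⟨x, hx, dx⟩ := Finset.mem_image.1 (e1.symm ▸ (by simp : 1 ∈ Finset.range 3))
  obtain ⟨y, hy, dy⟩ := Finset.mem_image.1 (e1.symm ▸ (by simp : 2 ∈ Finset.range 3))
  obtain ⟨z, hz, dz⟩ := Finset.mem_image.1 (e2.symm ▸ (by simp : 1 ∈ Finset.range 2))
  have lx := P.hd x
  have ly := P.hd y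
  have lz := P.hd z
  have px : P.p x = b₁ := by
    have h := (P.cases_D hx).resolve_left (by rintro rfl; omega)
    exact P.eq_of_d_le h (by omega)
  have py : P.p y = x := by
    have h := (P.cases_D hy).resolve_left (by rintro rfl; omega)
    exact hW 5 _ h _ hx (by omega) (by omega)
  have pz : P.p z = b₂ := by
    have h := (P.cases_D hz).resolve_left (by rintro rfl; omega)
    exact P.eq_of_d_le h (by omega)
  have nd : ∀ {u v : V}, P.d u ≠ P.d v → u ≠ v := by
    intro u v h h'; exact h (by rw [h'])
  have hxz : x ≠ z := by
    rintro rfl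
    exact h12 (by rw [← px, ← pz])
  have n1 : P.c ≠ x := nd (by omega)
  have n2 : P.c ≠ y := nd (by omega)
  have n3 : P.c ≠ z := nd (by omega)
  have n4 : b₁ ≠ x := nd (by omega)
  have n5 : b₁ ≠ y := nd (by omega)
  have n6 : b₁ ≠ z := nd (by omega)
  have n7 : b₂ ≠ x := nd (by omega)
  have n8 : b₂ ≠ y := nd (by omega)
  have n9 : b₂ ≠ z := nd (by omega)
  have n10 : b₃ ≠ x := nd (by omega)
  have n11 : b₃ ≠ y := nd (by omega)
  have n12 : b₃ ≠ z := nd (by omega)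
  have n13 : x ≠ y := nd (by omega)
  have n14 : z ≠ y := nd (by omega)
  have pc := P.p_c
  let g : Fin 7 → V := ![P.c, b₃, b₂, z, b₁, x, y]
  have ginj : Function.Injective g := by
    intro i j hij
    fin_cases i <;> fin_cases j <;> simp [g] at hij <;> first | rfl | (exfalso; grind)
  have gbij : Function.Bijective g := by
    rw [Fintype.bijective_iff_injective_and_card]
    exact ⟨ginj, by simp [hn]⟩
  let q : Fin 7 → Fin 7 := ![0, 0, 0, 2, 0, 4, 5]
  have hq : ∀ i, P.p (g i) = g (q i) := by
    intro i
    fin_cases i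
    · exact pc
    · exact hb₃
    · exact hb₂
    · exact pz
    · exact hb₁
    · exact px
    · exact py
  have gadj : ∀ i j, G.Adj (g i) (g j) ↔ E7.Adj i j := by
    intro i j
    rw [hF, ginj.ne_iff, hq, hq, ginj.eq_iff, ginj.eq_iff]
    exact E7_adj i j
  let e : E7 ≃g G :=
    { toEquiv := Equiv.ofBijective g gbij
      map_rel_iff' := by intro i j; exact gadj i j }
  exact ⟨e.symm⟩

theorem case3 (hF : P.Fits G) (hAF : AutFree G)
    (hmin : ∀ l : V, IsLeaf G l → ¬ AutFree (G.induce {x : V | x ≠ l})) {b₁ : V}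
    (hb₁ : P.p b₁ = P.c) (hbc₁ : b₁ ≠ P.c)
    (hn₁ : 2 * (P.D b₁).card + 1 = Fintype.card V)
    (hlt : ∀ v, v ≠ b₁ → P.p v = P.c → v ≠ P.c → (P.D v).card < (P.D b₁).card) :
    Nonempty (G ≃g E7) := by
  have hpos := D_card_pos (P := P) b₁
  have hcce := card_compl_erase (P := P) hbc₁
  obtain ⟨y, hy⟩ := Finset.card_pos.1 (by omega : 0 < ((Finset.univ \ P.D b₁).erase P.c).card)
  simp only [Finset.mem_erase, Finset.mem_sdiff, Finset.mem_univ, true_and] at hy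
  obtain ⟨v₀, hv₀, hvc₀, hyv₀⟩ := P.exists_child (P.mem_D_c y) hy.1
  have hvb₀ : v₀ ≠ b₁ := by rintro rfl; exact hy.2 hyv₀
  have hpos₀ := D_card_pos (P := P) v₀
  have hlt₀ := hlt v₀ hvb₀ hv₀ hvc₀
  obtain ⟨l, hlb, hne, hl, hgood⟩ := P.good_leaf b₁ (by omega)
  have hbl : ((P.D b₁).erase l).card + 1 = (P.D b₁).card := by
    rw [Finset.card_erase_of_mem hlb]; omega
  have hsz : ∀ v, P.p v = P.c → v ≠ P.c → 2 * ((P.D v).erase l).card + 3 ≤ Fintype.card V := by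
    intro v hv hvc
    by_cases hvb : v = b₁
    · rw [hvb]; omega
    · have := hlt v hvb hv hvc
      have := card_erase_le' (P := P) v l
      omega
  have hlv : ∀ v, v ≠ b₁ → P.p v = P.c → v ≠ P.c → l ∉ P.D v := by
    intro v hvb hv hvc h
    exact hvb (P.sib (by rw [hv, hb₁]) hvc hbc₁ h hlb)
  obtain ⟨f, hfne, hf⟩ := dele hF hAF hmin hl (fun v hv hvc => by
    have := hsz v hv hvc; omega)
  have hf : P.RIso (Finset.univ.erase l) P.c (Finset.univ.erase l) P.c f := by
    rcases hf with hf | ⟨b, hb, hbc, -, h, -⟩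
    · exact hf
    · have := hsz b hb hbc; omega
  obtain ⟨h1, h2, h3, h4⟩ := rooted_child hl hf hb₁ hbc₁ hne.symm
  have hfb : f b₁ ≠ b₁ := by
    intro h
    rw [h] at h4
    exact hfne (hgood f h4)
  rw [Finset.erase_eq_of_notMem (hlv _ hfb h1 h2)] at h4
  generalize hb2 : f b₁ = b₂ at *
  have hcard2 := h4.card
  have h12 : b₁ ≠ b₂ := hfb.symm
  have key2 : ∀ k, P.W (P.D b₁) b₁ k → P.W (P.D b₂) b₂ k := fun k hW =>
    h4.W_right (P.Sub_D_erase hl hne.symm) (P.Sub_D _) (W_mono (Finset.erase_subset _ _) hW)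
  -- the third child
  have hsub := sub_compl_erase hfb h1 h2 hb₁ hbc₁
  have hX : (((Finset.univ \ P.D b₁).erase P.c) \ P.D b₂).card = 1 := by
    rw [Finset.card_sdiff_of_subset hsub]; omega
  have hXv : ∀ v, v ≠ b₁ → v ≠ b₂ → P.p v = P.c → v ≠ P.c → ∀ x ∈ P.D v,
      x ∈ ((Finset.univ \ P.D b₁).erase P.c) \ P.D b₂ := by
    intro v hv1 hv2 hv hvc x hx
    rw [Finset.mem_sdiff]
    refine ⟨sub_compl_erase hv1 hv hvc hb₁ hbc₁ hx, fun h => ?_⟩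
    exact hv2 (P.sib (by rw [hv, h1]) hvc h2 hx h)
  obtain ⟨t, ht⟩ := Finset.card_pos.1 (by omega :
    0 < (((Finset.univ \ P.D b₁).erase P.c) \ P.D b₂).card)
  have ht' := ht
  simp only [Finset.mem_erase, Finset.mem_sdiff, Finset.mem_univ, true_and] at ht'
  obtain ⟨b₃, hb₃, hbc₃, htb⟩ := P.exists_child (P.mem_D_c t) ht'.1.1
  have h31 : b₃ ≠ b₁ := by rintro rfl; exact ht'.1.2 htb
  have h32 : b₃ ≠ b₂ := by intro h; rw [h] at htb; exact ht'.2 htb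
  have only : ∀ v, P.p v = P.c → v ≠ P.c → v = b₁ ∨ v = b₂ ∨ v = b₃ := by
    intro v hv hvc
    by_contra hcon
    push Not at hcon
    exact hcon.2.2 (Finset.card_le_one.1 hX.le v (hXv v hcon.1 hcon.2.1 hv hvc v (P.self_mem v))
      b₃ (hXv b₃ h31 h32 hb₃ hbc₃ b₃ (P.self_mem _)))
  have hD3 : ∀ x ∈ P.D b₃, x = b₃ := by
    intro x hx
    exact Finset.card_le_one.1 hX.le x (hXv b₃ h31 h32 hb₃ hbc₃ x hx)
      b₃ (hXv b₃ h31 h32 hb₃ hbc₃ b₃ (P.self_mem _))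
  have hc3 : (P.D b₃).card = 1 := by
    rw [Finset.card_eq_one]
    refine ⟨b₃, ?_⟩
    ext x
    simp only [Finset.mem_singleton]
    exact ⟨hD3 x, by rintro rfl; exact P.self_mem _⟩
  have hpos2 := D_card_pos (P := P) b₂
  have hge2 : 2 ≤ (P.D b₂).card := by
    by_contra hcon
    have hW1 : ∀ v, (P.D v).card ≤ 1 → ∀ k, P.W (P.D v) v k := by
      intro v hv k x hx y hy _ _
      exact Finset.card_le_one.1 hv x hx y hy
    obtain ⟨g, hg⟩ := path_iso (P.Sub_D b₂) (P.Sub_D b₃) (hW1 _ (by omega)) (hW1 _ (by omega))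
      (by omega)
    exact no_swap_sib hF hAF h32.symm h1 h2 hb₃ hbc₃ hg
  -- delete the leaf `b₃`
  have hleaf3 : P.Leaf b₃ := by
    intro x hx
    have := hD3 x (P.child_mem hx)
    rw [this] at hx
    exact P.p_ne hbc₃ hx
  have key1 : ∀ k, P.W (P.D b₂) b₂ k → P.W (P.D b₁) b₁ (k + 1) := by
    intro k hW
    obtain ⟨f', hfne', hf'⟩ := dele hF hAF hmin hleaf3 (by
      intro v hv hvc
      have := card_erase_le' (P := P) v b₃
      rcases only v hv hvc with h | h | h <;> subst h <;> omega)
    rcases hf' with hf' | ⟨b, hb, hbc, -, h, hf'⟩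
    · rw [hb₃, hf'.2.1] at hfne'
      exact absurd rfl hfne'
    · have hbb : b = b₁ := by
        have := card_erase_le' (P := P) b b₃
        rcases only b hb hbc with h' | h' | h'
        · exact h'
        · rw [h'] at this h; omega
        · rw [h'] at this h; omega
      subst hbb
      have hnot : b₃ ∉ P.D b := fun h =>
        h31 (P.sib (by rw [hb₃, hb]) hbc₃ hbc (P.self_mem _) h)
      rw [Finset.erase_eq_of_notMem hnot] at hf'
      refine hf'.W_left (P.Sub_D b) (P.Sub_erase hleaf3 hbc₃.symm (P.Sub_compl hbc)) ?_
      apply W_cons (B := P.D b₂) (b := b₂) _ (d_child h1 h2) hW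
      intro x hx hxc
      simp only [Finset.mem_erase, Finset.mem_sdiff, Finset.mem_univ, true_and] at hx
      obtain ⟨w, hw1, hw2, hw3⟩ := P.exists_child (P.mem_D_c x) hxc
      rcases only w hw1 hw2 with h' | h' | h'
      · rw [h'] at hw3; exact absurd hw3 hx.2
      · rw [← h']; exact hw3
      · rw [h'] at hw3; exact absurd (hD3 x hw3) hx.1
  have hW2 : ∀ k, P.W (P.D b₂) b₂ k := by
    intro k
    induction k with
    | zero => exact W_zero (P.Sub_D b₂)
    | succ k ih => exact key2 _ (key1 k ih)
  have hW1 : ∀ k, P.W (P.D b₁) b₁ k := by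
    intro k
    cases k with
    | zero => exact W_zero (P.Sub_D b₁)
    | succ k => exact key1 k (hW2 k)
  by_cases hm : (P.D b₁).card = 3
  · exact isoE7 hF h12 h31.symm h32.symm hb₁ hbc₁ h1 h2 hb₃ hbc₃ (by omega) hm (by omega) hW1 hW2
  exfalso
  obtain ⟨l', hlb', hne', hl', hgood'⟩ := P.good_leaf b₂ hge2
  have hbl' : ((P.D b₂).erase l').card + 1 = (P.D b₂).card := by
    rw [Finset.card_erase_of_mem hlb']; omega
  have hnot1 : l' ∉ P.D b₁ := fun h => h12 (P.sib (by rw [hb₁, h1]) hbc₁ h2 h hlb')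
  have hnot3 : l' ∉ P.D b₃ := fun h => h32 (P.sib (by rw [hb₃, h1]) hbc₃ h2 h hlb')
  obtain ⟨f', hfne', hf'⟩ := dele hF hAF hmin hl' (by
    intro v hv hvc
    have := card_erase_le' (P := P) v l'
    rcases only v hv hvc with h | h | h <;> subst h <;> omega)
  rcases hf' with hf' | ⟨b, hb, hbc, -, h, hf'⟩
  · obtain ⟨g1, g2, g3, g4⟩ := rooted_child hl' hf' h1 h2 hne'.symm
    have gc := g4.card
    rcases only _ g1 g2 with h | h | h
    · rw [h, Finset.erase_eq_of_notMem hnot1] at gc; omega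
    · rw [h] at g4
      exact hfne' (hgood' f' g4)
    · rw [h, Finset.erase_eq_of_notMem hnot3] at gc; omega
  · have hbb : b = b₁ := by
      have := card_erase_le' (P := P) b l'
      rcases only b hb hbc with h' | h' | h'
      · exact h'
      · rw [h'] at this h; omega
      · rw [h'] at this h; omega
    subst hbb
    rw [Finset.erase_eq_of_notMem hnot1] at hf'
    have hW := hf'.W_right (P.Sub_D b) (P.Sub_erase hl' hl'.ne_c.symm (P.Sub_compl hbc)) (hW1 1)
    have e2 := d_child h1 h2
    have e3 := d_child hb₃ hbc₃
    refine h32.symm (hW b₂ ?_ b₃ ?_ (by omega) (by omega))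
    · simp only [Finset.mem_erase, Finset.mem_sdiff, Finset.mem_univ, true_and]
      exact ⟨hne'.symm, fun h => h12.symm (P.sib (by rw [h1, hb]) h2 hbc (P.self_mem _) h)⟩
    · simp only [Finset.mem_erase, Finset.mem_sdiff, Finset.mem_univ, true_and]
      exact ⟨fun h => hnot3 (h ▸ P.self_mem b₃),
        fun h => h31 (P.sib (by rw [hb₃, hb]) hbc₃ hbc (P.self_mem _) h)⟩

theorem main_aux (hT : G.IsTree) (h2 : 2 ≤ Fintype.card V) (hAF : AutFree G)
    (hmin : ∀ l : V, IsLeaf G l → ¬ AutFree (G.induce {x : V | x ≠ l})) :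
    Nonempty (G ≃g E7) := by
  obtain ⟨P, hF, hcen⟩ := exists_centroid hT
  by_cases hA : ∃ b, P.p b = P.c ∧ b ≠ P.c ∧ 2 * (P.D b).card = Fintype.card V
  · obtain ⟨b, hb, hbc, hn⟩ := hA
    exact (case1' hF hAF hmin hb hbc hn).elim
  by_cases hB : ∃ b, P.p b = P.c ∧ b ≠ P.c ∧ 2 * (P.D b).card + 1 = Fintype.card V
  · obtain ⟨b, hb, hbc, hn⟩ := hB
    by_cases hC : ∃ v, v ≠ b ∧ P.p v = P.c ∧ v ≠ P.c ∧ (P.D b).card ≤ (P.D v).card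
    · obtain ⟨v, hvb, hv, hvc, hle⟩ := hC
      have := two hvb hv hvc hb hbc
      exact (case2' hF hAF hmin hvb hv hvc hb hbc (by omega) hn).elim
    · push Not at hC
      exact case3 hF hAF hmin hb hbc hn hC
  · push Not at hA hB
    exfalso
    have hDc : P.D P.c = Finset.univ := by
      ext x; simp [P.mem_D_c]
    obtain ⟨l, -, hlc, hl, hgood⟩ := P.good_leaf P.c (by rw [hDc, Finset.card_univ]; exact h2)
    rw [hDc] at hgood
    have hsz : ∀ v, P.p v = P.c → v ≠ P.c →
        2 * ((P.D v).erase l).card + 2 ≤ Fintype.card V := by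
      intro v hv hvc
      have h1 := hcen v hv hvc
      have h2 := hA v hv hvc
      have h3 := hB v hv hvc
      have := card_erase_le' (P := P) v l
      omega
    obtain ⟨f, hfne, hf⟩ := dele hF hAF hmin hl (fun v hv hvc => by
      have := hsz v hv hvc; omega)
    rcases hf with hf | ⟨b, hb, hbc, -, h, -⟩
    · exact hfne (hgood f hf)
    · have := hsz b hb hbc; omega
end graph
end Par
end

/-- A finite automorphism-free tree with at least two vertices, such that deleting any leaf
destroys automorphism-freeness, is isomorphic to `E7`. -/
theorem stmt_0 {V : Type*} [Fintype V] (G : SimpleGraph V)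
    (hT : G.IsTree) (h2 : 2 ≤ Fintype.card V)
    (hAF : AutFree G)
    (hmin : ∀ l : V, IsLeaf G l → ¬ AutFree (G.induce {x : V | x ≠ l})) :
    Nonempty (G ≃g E7) := by
  exact Par.main_aux hT h2 hAF hmin
end

section
/- Every finite automorphism-free tree T can be obtained from the tree E7 by successively adjoining one leaf at a time in such a way that each intermediate tree is also automorphism-free; that is, there is a sequence of trees T_0, T_1, ..., T_k with T_0 isomorphic to E7, T_k = T, each T_{i+1} obtained from T_i by adding a new vertex joined to exactly one vertex of T_i, and every T_i automorphism-free. -/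
open SimpleGraph

namespace AFT

/-- children of a code -/
def bits (n : ℕ) : Finset ℕ := n.bitIndices.toFinset

/-- code with the given children -/
def mk (s : Finset ℕ) : ℕ := ∑ i ∈ s, 2 ^ i

@[simp] lemma bits_mk (s : Finset ℕ) : bits (mk s) = s :=
  Finset.equivBitIndices.right_inv s

@[simp] lemma mk_bits (n : ℕ) : mk (bits n) = n :=
  Finset.equivBitIndices.left_inv n

lemma mk_inj {s t : Finset ℕ} (h : mk s = mk t) : s = t := by
  rw [← bits_mk s, h, bits_mk]

lemma bits_inj {m n : ℕ} (h : bits m = bits n) : m = n := by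
  rw [← mk_bits m, h, mk_bits]

lemma lt_of_mem_bits {i n : ℕ} (h : i ∈ bits n) : i < n := by
  have h1 : 2 ^ i ≤ n := Nat.two_pow_le_of_mem_bitIndices (by simpa [bits] using h)
  exact lt_of_lt_of_le Nat.lt_two_pow_self h1

@[simp] lemma bits_zero : bits 0 = ∅ := by
  ext i; simp only [Finset.notMem_empty, iff_false]
  intro h; exact absurd (lt_of_mem_bits h) (by omega)

lemma bits_nonempty {n : ℕ} (h : n ≠ 0) : (bits n).Nonempty := by
  rw [Finset.nonempty_iff_ne_empty]
  intro h0; apply h; apply bits_inj; simp [h0]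

/-- number of vertices of the coded tree -/
def sz (n : ℕ) : ℕ := 1 + ∑ i ∈ (bits n).attach, sz i.1
termination_by n
decreasing_by exact lt_of_mem_bits i.2

lemma sz_eq (n : ℕ) : sz n = 1 + ∑ i ∈ bits n, sz i := by
  rw [sz, Finset.sum_attach (bits n) sz]

lemma sz_mk (s : Finset ℕ) : sz (mk s) = 1 + ∑ i ∈ s, sz i := by
  rw [sz_eq, bits_mk]

lemma sz_pos (n : ℕ) : 0 < sz n := by rw [sz_eq]; omega

lemma sz_zero : sz 0 = 1 := by rw [sz_eq]; simp

lemma sz_lt_of_mem {i n : ℕ} (h : i ∈ bits n) : sz i < sz n := by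
  rw [sz_eq n]
  have := Finset.single_le_sum (f := sz) (fun _ _ => Nat.zero_le _) h
  omega

lemma sz_eq_one {n : ℕ} (h : sz n = 1) : n = 0 := by
  by_contra h0
  obtain ⟨i, hi⟩ := bits_nonempty h0
  have := sz_lt_of_mem hi
  have := sz_pos i
  omega

/-- deleting a leaf of a coded tree, staying asymmetric -/
inductive Del : ℕ → ℕ → Prop
  | leaf (n : ℕ) (h : 0 ∈ bits n) : Del n (mk ((bits n).erase 0))
  | step (n i j : ℕ) (hi : i ∈ bits n) (hd : Del i j) (hj : j ∉ bits n) :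
      Del n (mk (insert j ((bits n).erase i)))

lemma Del.sz {n m : ℕ} (h : Del n m) : sz n = sz m + 1 := by
  induction h with
  | leaf n h =>
    rw [sz_mk, sz_eq n, ← Finset.add_sum_erase _ _ h, sz_zero]; omega
  | step n i j hi hd hj ih =>
    rw [sz_mk, sz_eq n, ← Finset.add_sum_erase _ _ hi, Finset.sum_insert (by simp [hj]), ih]; omega

lemma Del.ne_zero {n m : ℕ} (h : Del n m) : n ≠ 0 := by
  rintro rfl
  have := h.sz
  have := sz_pos m
  rw [sz_zero] at *
  omega

lemma exists_del (n : ℕ) (hn : n ≠ 0) : ∃ m, Del n m ∧ ∀ k, (∀ i ∈ bits n, 2 * AFT.sz i < k) →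
    ∀ i ∈ bits m, 2 * AFT.sz i < k := by
  induction n using Nat.strong_induction_on with
  | _ n ih =>
    obtain ⟨i, hi, hmin⟩ := Finset.exists_min_image (bits n) sz (bits_nonempty hn)
    by_cases h0 : i = 0
    · subst h0
      refine ⟨_, Del.leaf n hi, fun k hk j hj => ?_⟩
      rw [bits_mk] at hj
      exact hk j (Finset.mem_of_mem_erase hj)
    · obtain ⟨j, hj, -⟩ := ih i (lt_of_mem_bits hi) h0
      have hs := hj.sz
      refine ⟨_, Del.step n i j hi hj (fun h => ?_), fun k hk l hl => ?_⟩
      · have := hmin j h; omega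
      · rw [bits_mk, Finset.mem_insert] at hl
        rcases hl with rfl | hl
        · have := hk i hi; omega
        · exact hk l (Finset.mem_of_mem_erase hl)

lemma del_single {a b : ℕ} (h : Del a b) : Del (mk {a}) (mk {b}) := by
  have hs := h.sz
  have h1 : b ∉ bits (mk {a}) := by
    rw [bits_mk, Finset.mem_singleton]; rintro rfl; omega
  have := Del.step (mk {a}) a b (by simp) h h1
  simpa using this

lemma mk_single_inj {a b : ℕ} (h : mk {a} = mk {b}) : a = b := by
  simpa using mk_inj h

lemma exists_del_ne (a b : ℕ) (hs : sz a = sz b) (hab : a ≠ b) :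
    (∃ a', Del a a' ∧ mk {a'} ≠ b) ∨ (∃ b', Del b b' ∧ mk {b'} ≠ a) := by
  induction a using Nat.strong_induction_on generalizing b with
  | _ a ih =>
    by_contra hcon
    push Not at hcon
    obtain ⟨h1, h2⟩ := hcon
    have ha : a ≠ 0 := by
      rintro rfl
      rw [sz_zero] at hs
      exact hab (sz_eq_one hs.symm).symm
    have hb : b ≠ 0 := by
      rintro rfl
      rw [sz_zero] at hs
      exact hab (sz_eq_one hs)
    obtain ⟨a', da, -⟩ := exists_del a ha
    obtain ⟨b', db, -⟩ := exists_del b hb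
    have e1 := h1 a' da
    have e2 := h2 b' db
    have s1 := da.sz
    have s2 := db.sz
    have hlt : b' < a := lt_of_mem_bits (by rw [← e2]; simp)
    rcases ih b' hlt a' (by omega) (by rintro rfl; exact hab (e2.symm.trans e1)) with
      ⟨c, hc, hne⟩ | ⟨c, hc, hne⟩
    · have := h1 (mk {c}) (by rw [← e2]; exact del_single hc)
      rw [← e1] at this
      exact hne (mk_single_inj this)
    · have := h2 (mk {c}) (by rw [← e1]; exact del_single hc)
      rw [← e2] at this
      exact hne (mk_single_inj this)

/-- numerical criterion for asymmetry of the unrooted tree -/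
def Good (m : ℕ) : Prop :=
  (∀ i ∈ bits m, 2 * sz i < sz m) ∨
    ∃ i ∈ bits m, 2 * sz i = sz m ∧ mk ((bits m).erase i) ≠ i

/-- code of E7 rooted at its vertex of degree three -/
def e7 : ℕ := mk {mk {mk {0}}, mk {0}, 0}

lemma mk_single_ne_zero (a : ℕ) : mk {a} ≠ 0 := by
  intro h
  have h2 := congrArg bits h
  simp at h2

lemma sz_single (a : ℕ) : sz (mk {a}) = sz a + 1 := by rw [sz_mk]; simp; omega

/-- deleting in the branch of index `X` -/
lemma step_good {n X X' : ℕ} (hX : X ∈ bits n) (hs : sz n = 2 * sz X + 1)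
    (hY : ∀ Y ∈ bits n, Y ≠ X → sz Y < sz X) (hd : Del X X') (hX' : X' ∉ bits n) :
    ∃ m, Del n m ∧ Good m := by
  have h1 := hd.sz
  have hD := Del.step n X X' hX hd hX'
  have h2 := hD.sz
  refine ⟨_, hD, Or.inl fun i hi => ?_⟩
  rw [bits_mk, Finset.mem_insert, Finset.mem_erase] at hi
  rcases hi with rfl | ⟨h3, h4⟩
  · omega
  · have := hY i h4 h3; omega

lemma two_case {X Y X' : ℕ} (hs : sz X = sz Y) (hd : Del X X') (hne : mk {X'} ≠ Y)
    (hXY : X ≠ Y) :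
    ∃ m, Del (mk {X, Y}) m ∧ Good m := by
  have h1 := hd.sz
  have hX' : X' ∉ bits (mk {X, Y}) := by
    rw [bits_mk]; simp only [Finset.mem_insert, Finset.mem_singleton]
    rintro (rfl | rfl) <;> omega
  have hD := Del.step (mk {X, Y}) X X' (by simp) hd hX'
  have e : insert X' ((bits (mk {X, Y})).erase X) = {X', Y} := by
    rw [bits_mk, Finset.erase_insert (by simpa using hXY)]
  rw [e] at hD
  have hne2 : X' ≠ Y := by rintro rfl; omega
  refine ⟨_, hD, Or.inr ⟨Y, by simp, ?_, ?_⟩⟩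
  · rw [sz_mk, Finset.sum_pair hne2]; omega
  · rw [bits_mk]
    have : ({X', Y} : Finset ℕ).erase Y = {X'} := by
      ext z; simp only [Finset.mem_erase, Finset.mem_insert, Finset.mem_singleton]
      constructor
      · rintro ⟨a, b | b⟩
        · exact b
        · exact absurd b a
      · rintro rfl; exact ⟨hne2, Or.inl rfl⟩
    rw [this]; exact hne

/-- a set with total size one is `{0}` -/
lemma eq_zero_of_sum_one {s : Finset ℕ} (h : ∑ i ∈ s, sz i = 1) : s = {0} := by
  have hne : s.Nonempty := by
    rw [Finset.nonempty_iff_ne_empty]; rintro rfl; simp at h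
  obtain ⟨i, hi⟩ := hne
  have h1 := Finset.add_sum_erase s sz hi
  have h2 := sz_pos i
  have h3 : i = 0 := sz_eq_one (by omega)
  subst h3
  have h4 : ∑ j ∈ s.erase 0, sz j = 0 := by omega
  rw [Finset.sum_eq_zero_iff] at h4
  ext j
  rw [Finset.mem_singleton]
  constructor
  · intro hj
    by_contra hj0
    have := h4 j (Finset.mem_erase.2 ⟨hj0, hj⟩)
    have := sz_pos j
    omega
  · rintro rfl; exact hi

lemma erase3 {a b : ℕ} (ha : a ≠ 0) (hb : b ≠ 0) :
    ({a, b, 0} : Finset ℕ).erase 0 = {a, b} := by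
  ext z
  simp only [Finset.mem_erase, Finset.mem_insert, Finset.mem_singleton]
  omega

lemma swap3 {a b c : ℕ} (hab : a ≠ b) (hb : b ≠ 0) :
    insert c (({a, b, 0} : Finset ℕ).erase b) = {a, c, 0} := by
  ext z
  simp only [Finset.mem_erase, Finset.mem_insert, Finset.mem_singleton]
  omega

lemma model_step (n : ℕ) (hn : n ≠ 0) (hc : ∀ i ∈ bits n, 2 * sz i < sz n) :
    (∃ m, Del n m ∧ Good m) ∨ n = e7 := by
  by_cases hX : ∃ X ∈ bits n, sz n = 2 * sz X + 1
  swap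
  · left
    push Not at hX
    obtain ⟨m, hm, hk⟩ := exists_del n hn
    have hs := hm.sz
    refine ⟨m, hm, Or.inl fun i hi => hk _ (fun j hj => ?_) i hi⟩
    have := hc j hj
    have := hX j hj
    omega
  obtain ⟨X, hX, hsX⟩ := hX
  have hsum := Finset.add_sum_erase (bits n) sz hX
  have hszn := sz_eq n
  have hsum' : ∑ i ∈ (bits n).erase X, sz i = sz X := by omega
  by_cases hY : ∃ Y ∈ bits n, Y ≠ X ∧ sz X ≤ sz Y
  · left
    obtain ⟨Y, hY, hYX, hle⟩ := hY
    have hYe : Y ∈ (bits n).erase X := Finset.mem_erase.2 ⟨hYX, hY⟩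
    have h2 := Finset.add_sum_erase _ sz hYe
    have hb : bits n = {X, Y} := by
      ext z
      simp only [Finset.mem_insert, Finset.mem_singleton]
      constructor
      · intro hz
        by_contra hcon
        push Not at hcon
        have hz' : z ∈ ((bits n).erase X).erase Y := by simp [hz, hcon.1, hcon.2]
        have h3 := Finset.single_le_sum (f := sz) (fun _ _ => Nat.zero_le _) hz'
        have := sz_pos z
        omega
      · rintro (rfl | rfl) <;> assumption
    have hnn : n = mk {X, Y} := by rw [← hb, mk_bits]
    have hsY : sz X = sz Y := by
      have := Nat.zero_le (∑ x ∈ ((bits n).erase X).erase Y, sz x)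
      omega
    rcases exists_del_ne X Y hsY hYX.symm with ⟨a, ha, hne⟩ | ⟨a, ha, hne⟩
    · rw [hnn]; exact two_case hsY ha hne hYX.symm
    · rw [hnn, Finset.pair_comm]; exact two_case hsY.symm ha hne hYX
  · push Not at hY
    have hX0 : X ≠ 0 := by
      rintro rfl
      rw [sz_zero] at hsum'
      have h := eq_zero_of_sum_one hsum'
      have : (0 : ℕ) ∈ (bits n).erase 0 := by rw [h]; simp
      simp at this
    obtain ⟨X', hd, -⟩ := exists_del X hX0
    by_cases hX' : X' ∈ bits n
    swap
    · exact Or.inl (step_good hX hsX hY hd hX')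
    have hs' := hd.sz
    have hX'X : X' ≠ X := by rintro rfl; omega
    have hX'e : X' ∈ (bits n).erase X := Finset.mem_erase.2 ⟨hX'X, hX'⟩
    have h2 := Finset.add_sum_erase _ sz hX'e
    have h3 : ((bits n).erase X).erase X' = {0} := eq_zero_of_sum_one (by omega)
    have hb : bits n = {X, X', 0} := by
      rw [← h3, Finset.insert_erase hX'e, Finset.insert_erase hX]
    have h0X' : X' ≠ 0 := by
      rintro rfl
      have : (0 : ℕ) ∈ ((bits n).erase X).erase 0 := by rw [h3]; simp
      simp at this
    by_cases hXX : mk {X'} = X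
    swap
    · left
      have hD := Del.leaf n (by rw [hb]; simp)
      have hszm := hD.sz
      have e : (bits n).erase 0 = {X, X'} := by
        rw [hb]; exact erase3 hX0 h0X'
      rw [e] at hD hszm
      refine ⟨_, hD, Or.inr ⟨X, by simp, by omega, ?_⟩⟩
      rw [bits_mk, Finset.erase_insert (by simpa using hX'X.symm)]
      exact hXX
    obtain ⟨X'', hd', -⟩ := exists_del X' h0X'
    have hdX : Del X (mk {X''}) := by rw [← hXX]; exact del_single hd'
    by_cases hm : mk {X''} ∈ bits n
    swap
    · exact Or.inl (step_good hX hsX hY hdX hm)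
    have hXX' : mk {X''} = X' := by
      have := hdX.sz
      rw [hb] at hm
      simp only [Finset.mem_insert, Finset.mem_singleton] at hm
      rcases hm with h | h | h
      · rw [h] at this; omega
      · exact h
      · exact absurd h (mk_single_ne_zero _)
    by_cases h0 : X'' = 0
    · right
      rw [← mk_bits n, hb, ← hXX, ← hXX', h0]; rfl
    left
    obtain ⟨Z, hZ, -⟩ := exists_del X'' h0
    have hdZ : Del X' (mk {Z}) := by rw [← hXX']; exact del_single hZ
    have hsZ := hdZ.sz
    have hD := Del.step n X' (mk {Z}) hX' hdZ (by
      rw [hb]; simp only [Finset.mem_insert, Finset.mem_singleton]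
      rintro (h | h | h)
      · rw [h] at hsZ; omega
      · rw [h] at hsZ; omega
      · exact absurd h (mk_single_ne_zero _))
    have hszm := hD.sz
    have e : insert (mk {Z}) ((bits n).erase X') = {X, mk {Z}, 0} := by
      rw [hb]; exact swap3 hX'X.symm h0X'
    rw [e] at hD hszm
    refine ⟨_, hD, Or.inr ⟨X, by simp, by omega, ?_⟩⟩
    rw [bits_mk]
    intro h
    have h5 := mk_inj (h.trans hXX.symm)
    have hzX : mk {Z} ≠ X := by intro h; rw [h] at hsZ; omega
    have m1 : mk {Z} ∈ ({X, mk {Z}, 0} : Finset ℕ).erase X := by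
      simp [hzX]
    have m2 : 0 ∈ ({X, mk {Z}, 0} : Finset ℕ).erase X := by
      simp [hX0.symm]
    rw [h5, Finset.mem_singleton] at m1 m2
    exact h0X' m2.symm

variable {V W : Type*} {G : SimpleGraph V} {G' : SimpleGraph W}

/-- the branch at `v` away from `p` (everything if `p = v`) -/
def Br (G : SimpleGraph V) (p v : V) : Set V := {u | G.dist v u ≤ G.dist p u}

/-- admissible pairs -/
def PV (G : SimpleGraph V) (p v : V) : Prop := p = v ∨ G.Adj p v

lemma dd (hT : G.IsTree) (u : V) {v w : V} (h : G.Adj v w) :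
    G.dist v u = G.dist w u + 1 ∨ G.dist w u = G.dist v u + 1 := by
  have := hT.dist_eq_dist_add_one_of_adj u h
  rwa [G.dist_comm (u := u) (v := v), G.dist_comm (u := u) (v := w)] at this

lemma nxt_exists (hT : G.IsTree) {v u : V} (h : v ≠ u) :
    ∃ w, G.Adj v w ∧ G.dist v u = G.dist w u + 1 := by
  obtain ⟨p, hp⟩ := hT.connected.exists_walk_length_eq_dist v u
  cases p with
  | nil => exact absurd rfl h
  | @cons _ w _ hadj q =>
    refine ⟨w, hadj, ?_⟩
    have h1 := G.dist_le q
    rw [Walk.length_cons] at hp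
    rcases dd hT u hadj with h2 | h2 <;> omega

lemma nxt_unique (hT : G.IsTree) {v u w w' : V} (h : G.Adj v w) (h' : G.Adj v w')
    (hd : G.dist v u = G.dist w u + 1) (hd' : G.dist v u = G.dist w' u + 1) : w = w' := by
  obtain ⟨p, hp⟩ := hT.connected.exists_walk_length_eq_dist w u
  obtain ⟨q, hq⟩ := hT.connected.exists_walk_length_eq_dist w' u
  have h1 : (Walk.cons h p).IsPath :=
    Walk.isPath_of_length_eq_dist _ (by rw [Walk.length_cons]; omega)
  have h2 : (Walk.cons h' q).IsPath :=
    Walk.isPath_of_length_eq_dist _ (by rw [Walk.length_cons]; omega)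
  have h3 := (hT.existsUnique_path v u).unique h1 h2
  have h4 := congrArg Walk.snd h3
  simpa using h4

lemma mem_br_adj (hT : G.IsTree) {p v u : V} (h : G.Adj p v) :
    u ∈ Br G p v ↔ G.dist p u = G.dist v u + 1 := by
  unfold Br
  rw [Set.mem_ofPred_eq]
  rcases dd hT u h with h2 | h2 <;> omega

lemma self_mem_br (p v : V) : v ∈ Br G p v := by
  simp [Br]

lemma notMem_br (hT : G.IsTree) {v w : V} (h : G.Adj v w) : v ∉ Br G v w := by
  rw [mem_br_adj hT h]; simp

lemma br_disj (hT : G.IsTree) {v w w' u : V} (h : G.Adj v w) (h' : G.Adj v w')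
    (hu : u ∈ Br G v w) (hu' : u ∈ Br G v w') : w = w' :=
  nxt_unique hT h h' ((mem_br_adj hT h).1 hu) ((mem_br_adj hT h').1 hu')

lemma br_compl (hT : G.IsTree) {p v u : V} (h : G.Adj p v) :
    u ∈ Br G p v ↔ u ∉ Br G v p := by
  rw [mem_br_adj hT h, mem_br_adj hT h.symm]
  rcases dd hT u h with h2 | h2 <;> omega

lemma br_self (v : V) : Br G v v = Set.univ := by
  ext; simp [Br]

lemma br_sub (hT : G.IsTree) {p v w : V} (hp : PV G p v) (h : G.Adj v w) (hw : w ≠ p) :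
    Br G v w ⊆ Br G p v := by
  intro u hu
  rcases hp with rfl | hp
  · rw [br_self]; trivial
  · rw [br_compl hT hp]
    intro h2
    exact hw (br_disj hT h hp.symm hu h2)

lemma br_cases (hT : G.IsTree) {p v u : V} (hp : PV G p v) (hu : u ∈ Br G p v) (huv : u ≠ v) :
    ∃ w, (G.Adj v w ∧ w ≠ p) ∧ u ∈ Br G v w := by
  obtain ⟨w, hw, hd⟩ := nxt_exists hT huv.symm
  refine ⟨w, ⟨hw, ?_⟩, (mem_br_adj hT hw).2 hd⟩
  rintro rfl
  rcases hp with rfl | hp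
  · exact G.loopless.irrefl _ hw
  · exact ((br_compl hT hp).1 hu) ((mem_br_adj hT hw).2 hd)

/-- `Rep G p v n`: the branch at `v` away from `p` is coded by `n` -/
inductive Rep (G : SimpleGraph V) : V → V → ℕ → Prop
  | intro (p v : V) (n : ℕ) (f : V → ℕ)
      (hf : Set.BijOn f {w | G.Adj v w ∧ w ≠ p} (bits n : Set ℕ))
      (h : ∀ w, G.Adj v w → w ≠ p → Rep G v w (f w)) : Rep G p v n

lemma Rep.unique {p v : V} {n m : ℕ} (h : Rep G p v n) (h' : Rep G p v m) : n = m := by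
  induction h generalizing m with
  | intro p v n f hf h ih =>
    cases h' with
    | intro _ _ _ g hg h' =>
      apply bits_inj
      apply Finset.coe_injective
      rw [← hf.image_eq, ← hg.image_eq]
      apply Set.image_congr
      rintro w ⟨hw, hwp⟩
      exact ih w hw hwp (h' w hw hwp)

lemma Rep.comap {e : W → V} (he : Function.Injective e)
    (hadj : ∀ a b, G'.Adj a b ↔ G.Adj (e a) (e b))
    (hcl : ∀ a b, G.Adj (e a) b → ∃ c, e c = b) {a b : V} {n : ℕ} (h : Rep G a b n) :
    ∀ p v, e p = a → e v = b → Rep G' p v n := by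
  induction h with
  | intro a b n f hf h ih =>
    rintro p v rfl rfl
    refine Rep.intro p v n (f ∘ e) ⟨?_, ?_, ?_⟩ ?_
    · rintro w ⟨hw, hwp⟩
      exact hf.mapsTo ⟨(hadj _ _).1 hw, fun h => hwp (he h)⟩
    · rintro w ⟨hw, hwp⟩ w' ⟨hw', hwp'⟩ hh
      exact he (hf.injOn ⟨(hadj _ _).1 hw, fun h => hwp (he h)⟩
        ⟨(hadj _ _).1 hw', fun h => hwp' (he h)⟩ hh)
    · intro i hi
      obtain ⟨b, ⟨hb, hbp⟩, rfl⟩ := hf.surjOn hi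
      obtain ⟨c, rfl⟩ := hcl _ _ hb
      exact ⟨c, ⟨(hadj _ _).2 hb, fun h => hbp (by rw [h])⟩, rfl⟩
    · intro w hw hwp
      exact ih (e w) ((hadj _ _).1 hw) (fun h => hwp (he h)) v w rfl rfl

lemma Rep.map_iso (φ : G ≃g G) {p v : V} {n : ℕ} (h : Rep G p v n) : Rep G (φ p) (φ v) n := by
  refine h.comap (e := φ.symm) φ.symm.injective (fun a b => (φ.symm.map_adj_iff).symm)
    (fun a b _ => φ.symm.surjective b) _ _ (by simp) (by simp)

lemma Rep.fix (hT : G.IsTree) (φ : G ≃g G) {p v : V} {n : ℕ} (h : Rep G p v n)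
    (hpv : PV G p v) (hp : φ p = p) (hv : φ v = v) : ∀ u ∈ Br G p v, φ u = u := by
  induction h with
  | intro p v n f hf h ih =>
    intro u hu
    by_cases huv : u = v
    · rw [huv, hv]
    obtain ⟨w, ⟨hw, hwp⟩, huw⟩ := br_cases hT hpv hu huv
    refine ih w hw hwp (Or.inr hw) hv ?_ u huw
    have a1 : G.Adj v (φ w) := by rw [← hv]; exact φ.map_adj_iff.2 hw
    have a2 : φ w ≠ p := by
      intro h; rw [← hp] at h; exact hwp (φ.injective h)
    have r1 := (h w hw hwp).map_iso φ
    rw [hv] at r1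
    have r2 := h (φ w) a1 a2
    exact hf.injOn ⟨a1, a2⟩ ⟨hw, hwp⟩ (r2.unique r1)

/-- branch size -/
noncomputable def bc (G : SimpleGraph V) (p v : V) : ℕ := (Br G p v).ncard

lemma Rep.card [Finite V] (hT : G.IsTree) {p v : V} {n : ℕ} (h : Rep G p v n) (hpv : PV G p v) :
    bc G p v = sz n := by
  classical
  have := Fintype.ofFinite V
  induction h with
  | intro p v n f hf h ih =>
    let C : Finset V := Finset.univ.filter fun w => G.Adj v w ∧ w ≠ p
    have hC : ∀ w, w ∈ C ↔ G.Adj v w ∧ w ≠ p := by intro w; simp [C]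
    let D : Finset V := C.biUnion fun w => (Br G v w).toFinite.toFinset
    have hB : Br G p v = ↑(insert v D) := by
      ext u
      simp only [Finset.coe_insert, Set.mem_insert_iff, Finset.mem_coe]
      constructor
      · intro hu
        by_cases huv : u = v
        · exact Or.inl huv
        · right
          obtain ⟨w, hw, huw⟩ := br_cases hT hpv hu huv
          exact Finset.mem_biUnion.2 ⟨w, (hC w).2 hw, by simpa using huw⟩
      · rintro (rfl | hu)
        · exact self_mem_br _ _
        · obtain ⟨w, hw, huw⟩ := Finset.mem_biUnion.1 hu
          obtain ⟨h1, h2⟩ := (hC w).1 hw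
          exact br_sub hT hpv h1 h2 (by simpa using huw)
    have hvD : v ∉ D := by
      intro hu
      obtain ⟨w, hw, huw⟩ := Finset.mem_biUnion.1 hu
      exact notMem_br hT ((hC w).1 hw).1 (by simpa using huw)
    rw [bc, hB, Set.ncard_coe_finset, Finset.card_insert_of_notMem hvD, Finset.card_biUnion, sz_eq]
    · rw [add_comm]
      congr 1
      refine Finset.sum_nbij f ?_ ?_ ?_ ?_
      · intro w hw; exact hf.mapsTo ((hC w).1 hw)
      · intro w hw w' hw'; exact hf.injOn ((hC w).1 hw) ((hC w').1 hw')
      · intro i hi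
        obtain ⟨w, hw, rfl⟩ := hf.surjOn hi
        exact ⟨w, (hC w).2 hw, rfl⟩
      · intro w hw
        have hw' := (hC w).1 hw
        rw [← ih w hw'.1 hw'.2 (Or.inr hw'.1), bc, Set.ncard_eq_toFinset_card _ (Br G v w).toFinite]
    · intro w hw w' hw' hne
      rw [Function.onFun, Finset.disjoint_left]
      intro u hu hu'
      exact hne (br_disj hT ((hC w).1 hw).1 ((hC w').1 hw').1 (by simpa using hu)
        (by simpa using hu'))

/-- branch isomorphisms -/
def BI (G : SimpleGraph V) (G' : SimpleGraph W) (F : V → W) (p v : V) (p' v' : W) : Prop :=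
  Set.BijOn F (Br G p v) (Br G' p' v') ∧ F v = v' ∧
    ∀ x ∈ Br G p v, ∀ y ∈ Br G p v, G.Adj x y → G'.Adj (F x) (F y)

lemma glue (hT : G.IsTree) (hT' : G'.IsTree) {p v : V} {p' v' : W} (hp : PV G p v)
    (hp' : PV G' p' v') (σ : V → W)
    (hσ : Set.BijOn σ {w | G.Adj v w ∧ w ≠ p} {w | G'.Adj v' w ∧ w ≠ p'})
    (ψ : V → V → W) (hψ : ∀ w, G.Adj v w → w ≠ p → BI G G' (ψ w) v w v' (σ w)) :
    ∃ F, BI G G' F p v p' v' ∧ ∀ w, G.Adj v w → w ≠ p → F w = σ w := by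
  classical
  let F : V → W := fun u => if h : u ≠ v ∧ ∃ w, (G.Adj v w ∧ w ≠ p) ∧ u ∈ Br G v w then
    ψ h.2.choose u else v'
  have hFv : F v = v' := by simp [F]
  have hF : ∀ w u, G.Adj v w → w ≠ p → u ∈ Br G v w → F u = ψ w u := by
    intro w u hw hwp hu
    have huv : u ≠ v := by rintro rfl; exact notMem_br hT hw hu
    have h : u ≠ v ∧ ∃ w, (G.Adj v w ∧ w ≠ p) ∧ u ∈ Br G v w := ⟨huv, w, ⟨hw, hwp⟩, hu⟩
    have : h.2.choose = w := br_disj hT h.2.choose_spec.1.1 hw h.2.choose_spec.2 hu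
    simp only [F]
    rw [dif_pos h, this]
  have hadj' : ∀ x ∈ Br G p v, ∀ y ∈ Br G p v, G.dist v y = G.dist v x + 1 → G.Adj x y →
      G'.Adj (F x) (F y) := by
    intro x hx y hy hd hxy
    have hyv : y ≠ v := by rintro rfl; simp at hd
    by_cases hxv : x = v
    · subst hxv
      have hyp : y ≠ p := by
        rintro rfl
        rcases hp with h | h
        · exact hyv h
        · exact notMem_br hT h hy
      have hs := hσ.mapsTo (show y ∈ {w | G.Adj x w ∧ w ≠ p} from ⟨hxy, hyp⟩)
      rw [hFv, hF y y hxy hyp (self_mem_br _ _), (hψ y hxy hyp).2.1]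
      exact hs.1
    · obtain ⟨w, ⟨hw, hwp⟩, hxw⟩ := br_cases hT hp hx hxv
      have hyw : y ∈ Br G v w := by
        rw [mem_br_adj hT hw] at hxw ⊢
        have h1 := dd hT w hxy
        rw [G.dist_comm (u := x), G.dist_comm (u := y)] at h1
        have h2 := dd hT y hw
        omega
      rw [hF w x hw hwp hxw, hF w y hw hwp hyw]
      exact (hψ w hw hwp).2.2 x hxw y hyw hxy
  refine ⟨F, ⟨⟨?_, ?_, ?_⟩, hFv, ?_⟩, ?_⟩
  · intro u hu
    by_cases huv : u = v
    · rw [huv, hFv]; exact self_mem_br _ _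
    · obtain ⟨w, ⟨hw, hwp⟩, huw⟩ := br_cases hT hp hu huv
      rw [hF w u hw hwp huw]
      have hs := hσ.mapsTo (show w ∈ {w | G.Adj v w ∧ w ≠ p} from ⟨hw, hwp⟩)
      exact br_sub hT' hp' hs.1 hs.2 ((hψ w hw hwp).1.mapsTo huw)
  · have key : ∀ u ∈ Br G p v, u ≠ v → F u ≠ v' := by
      intro u hu huv
      obtain ⟨w, ⟨hw, hwp⟩, huw⟩ := br_cases hT hp hu huv
      have hs := hσ.mapsTo (show w ∈ {w | G.Adj v w ∧ w ≠ p} from ⟨hw, hwp⟩)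
      have h1 := (hψ w hw hwp).1.mapsTo huw
      rw [hF w u hw hwp huw]
      intro h2
      rw [h2] at h1
      exact notMem_br hT' hs.1 h1
    intro u hu u' hu' huu
    by_cases huv : u = v
    · by_cases huv' : u' = v
      · rw [huv, huv']
      · exact absurd (by rw [← huu, huv, hFv]) (key u' hu' huv')
    · by_cases huv' : u' = v
      · exact absurd (by rw [huu, huv', hFv]) (key u hu huv)
      · obtain ⟨w, ⟨hw, hwp⟩, huw⟩ := br_cases hT hp hu huv
        obtain ⟨w', ⟨hw', hwp'⟩, huw'⟩ := br_cases hT hp hu' huv'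
        rw [hF w u hw hwp huw, hF w' u' hw' hwp' huw'] at huu
        have hs := hσ.mapsTo (show w ∈ {w | G.Adj v w ∧ w ≠ p} from ⟨hw, hwp⟩)
        have hs' := hσ.mapsTo (show w' ∈ {w | G.Adj v w ∧ w ≠ p} from ⟨hw', hwp'⟩)
        have h1 := (hψ w hw hwp).1.mapsTo huw
        have h1' := (hψ w' hw' hwp').1.mapsTo huw'
        rw [← huu] at h1'
        have h2 := br_disj hT' hs.1 hs'.1 h1 h1'
        have h3 : w = w' := hσ.injOn ⟨hw, hwp⟩ ⟨hw', hwp'⟩ h2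
        subst h3
        exact (hψ w hw hwp).1.injOn huw huw' huu
  · intro z hz
    by_cases hzv : z = v'
    · exact ⟨v, self_mem_br _ _, by rw [hFv, hzv]⟩
    · obtain ⟨w', hw', hzw⟩ := br_cases hT' hp' hz hzv
      obtain ⟨w, ⟨hw, hwp⟩, rfl⟩ := hσ.surjOn hw'
      obtain ⟨u, hu, rfl⟩ := (hψ w hw hwp).1.surjOn hzw
      exact ⟨u, br_sub hT hp hw hwp hu, hF w u hw hwp hu⟩
  · intro x hx y hy hxy
    have h1 := dd hT v hxy
    rw [G.dist_comm (u := x), G.dist_comm (u := y)] at h1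
    rcases h1 with h1 | h1
    · exact (hadj' y hy x hx h1 hxy.symm).symm
    · exact hadj' x hx y hy h1 hxy
  · intro w hw hwp
    rw [hF w w hw hwp (self_mem_br _ _), (hψ w hw hwp).2.1]

lemma iso_of_rep (hT : G.IsTree) (hT' : G'.IsTree) {p v : V} {p' v' : W} {n : ℕ}
    (h : Rep G p v n) (h' : Rep G' p' v' n) (hp : PV G p v) (hp' : PV G' p' v') :
    ∃ F, BI G G' F p v p' v' := by
  induction h generalizing p' v' with
  | intro p v n f hf h ih =>
    cases h' with
    | intro _ _ _ g hg h' =>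
      have hne : Nonempty W := ⟨v'⟩
      let σ : V → W := fun w => Function.invFunOn g {w | G'.Adj v' w ∧ w ≠ p'} (f w)
      have hσ : Set.BijOn σ {w | G.Adj v w ∧ w ≠ p} {w | G'.Adj v' w ∧ w ≠ p'} :=
        (hg.symm hg.invOn_invFunOn.symm).comp hf
      have hgσ : ∀ w, G.Adj v w → w ≠ p → g (σ w) = f w := by
        intro w hw hwp
        exact hg.invOn_invFunOn.2 (hf.mapsTo ⟨hw, hwp⟩)
      have hex : ∀ w, ∃ F : V → W, (G.Adj v w ∧ w ≠ p) → BI G G' F v w v' (σ w) := by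
        intro w
        by_cases hw : G.Adj v w ∧ w ≠ p
        · have hs := hσ.mapsTo hw
          have r := h' (σ w) hs.1 hs.2
          rw [hgσ w hw.1 hw.2] at r
          obtain ⟨F, hF⟩ := ih w hw.1 hw.2 r (Or.inr hw.1) (Or.inr hs.1)
          exact ⟨F, fun _ => hF⟩
        · exact ⟨fun _ => v', fun h => absurd h hw⟩
      choose ψ hψ using hex
      obtain ⟨F, hF, -⟩ := glue hT hT' hp hp' σ hσ ψ (fun w hw hwp => hψ w ⟨hw, hwp⟩)
      exact ⟨F, hF⟩

/-- a bijective endomorphism of a finite graph is an automorphism -/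
lemma bij_end [Finite V] (F : V → V) (hb : Function.Bijective F)
    (hF : ∀ x y, G.Adj x y → G.Adj (F x) (F y)) (x y : V) : G.Adj (F x) (F y) ↔ G.Adj x y := by
  refine ⟨fun h => ?_, hF x y⟩
  have : Finite (Equiv.Perm V) := inferInstance
  let e : Equiv.Perm V := Equiv.ofBijective F hb
  have hk := isOfFinOrder_of_finite e
  have hpow : ∀ k : ℕ, ∀ x y, G.Adj x y → G.Adj ((e ^ k) x) ((e ^ k) y) := by
    intro k
    induction k with
    | zero => intro x y h; simpa using h
    | succ k ih => intro x y h; rw [pow_succ]; exact ih _ _ (hF x y h)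
  have h1 : e ^ (orderOf e - 1) * e = 1 := by
    rw [← pow_succ, Nat.sub_add_cancel hk.orderOf_pos, pow_orderOf_eq_one]
  have h2 := hpow (orderOf e - 1) _ _ h
  have h3 : ∀ z, (e ^ (orderOf e - 1)) (F z) = z := fun z => congrArg (fun p : Equiv.Perm V => p z) h1
  rwa [h3, h3] at h2

lemma autFree_bi [Finite V] (hA : AutFree G) {F : V → V} {v v' : V} (hF : BI G G F v v v' v') :
    ∀ u, F u = u := by
  obtain ⟨h1, -, h3⟩ := hF
  rw [br_self, br_self, Set.bijOn_univ] at h1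
  rw [br_self] at h3
  have h4 := bij_end F h1 (fun x y => h3 x trivial y trivial)
  exact hA ⟨Equiv.ofBijective F h1, fun {a b} => h4 a b⟩

lemma sib_ne [Finite V] (hT : G.IsTree) (hA : AutFree G) {v w w' : V} {i : ℕ}
    (hw : G.Adj v w) (hw' : G.Adj v w') (hr : Rep G v w i) (hr' : Rep G v w' i) : w = w' := by
  classical
  by_contra hne
  obtain ⟨F, hF⟩ := iso_of_rep hT hT hr hr' (Or.inr hw) (Or.inr hw')
  obtain ⟨F', hF'⟩ := iso_of_rep hT hT hr' hr (Or.inr hw') (Or.inr hw)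
  have hC : ∀ u, G.Adj v (Equiv.swap w w' u) ↔ G.Adj v u := by
    intro u
    rcases eq_or_ne u w with rfl | h1
    · simp [hw, hw']
    rcases eq_or_ne u w' with rfl | h2
    · simp [hw, hw']
    rw [Equiv.swap_apply_of_ne_of_ne h1 h2]
  have hv : ∀ u, G.Adj v u → u ≠ v := fun u h => h.ne'
  obtain ⟨K, hK, hKw⟩ := glue hT hT (p := v) (v := v) (p' := v) (v' := v) (Or.inl rfl) (Or.inl rfl)
    (Equiv.swap w w') ⟨fun u hu => ⟨(hC u).2 hu.1, hv _ ((hC u).2 hu.1)⟩,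
      (Equiv.swap w w').injective.injOn, fun u hu => ⟨Equiv.swap w w' u,
        ⟨(hC u).2 hu.1, hv _ ((hC u).2 hu.1)⟩, by simp⟩⟩
    (fun u => if u = w then F else if u = w' then F' else id) (by
      intro u hu _
      rcases eq_or_ne u w with rfl | h1
      · simpa using hF
      rcases eq_or_ne u w' with rfl | h2
      · simpa [h1] using hF'
      rw [Equiv.swap_apply_of_ne_of_ne h1 h2]
      simp only [h1, h2, if_false]
      exact ⟨Set.bijOn_id _, rfl, fun x _ y _ h => h⟩)
  have h1 := hKw w hw hw.ne'
  rw [autFree_bi hA hK w, Equiv.swap_apply_left] at h1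
  exact hne h1

lemma bc_lt [Finite V] (hT : G.IsTree) {p v w : V} (hp : PV G p v) (h : G.Adj v w) (hw : w ≠ p) :
    bc G v w < bc G p v := by
  apply Set.ncard_lt_ncard _ (Set.toFinite _)
  refine ⟨br_sub hT hp h hw, fun h2 => notMem_br hT h (h2 (self_mem_br _ _))⟩

lemma exists_rep [Finite V] (hT : G.IsTree) (hA : AutFree G) (p v : V) (hp : PV G p v) :
    ∃ n, Rep G p v n := by
  classical
  have := Fintype.ofFinite V
  induction hk : bc G p v using Nat.strong_induction_on generalizing p v with
  | _ k ih =>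
    have hex : ∀ w, ∃ i, (G.Adj v w ∧ w ≠ p) → Rep G v w i := by
      intro w
      by_cases hw : G.Adj v w ∧ w ≠ p
      · obtain ⟨i, hi⟩ := ih _ (hk ▸ bc_lt hT hp hw.1 hw.2) v w (Or.inr hw.1) rfl
        exact ⟨i, fun _ => hi⟩
      · exact ⟨0, fun h => absurd h hw⟩
    choose f hf using hex
    let C : Finset V := Finset.univ.filter fun w => G.Adj v w ∧ w ≠ p
    have hC : (C : Set V) = {w | G.Adj v w ∧ w ≠ p} := by ext; simp [C]
    refine ⟨mk (C.image f), Rep.intro p v _ f ?_ (fun w h1 h2 => hf w ⟨h1, h2⟩)⟩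
    rw [bits_mk, Finset.coe_image, hC]
    apply Set.InjOn.bijOn_image
    intro w hw w' hw' he
    have h1 := hf w hw
    rw [he] at h1
    exact sib_ne hT hA hw.1 hw'.1 h1 (hf w' hw')

/-- isolating a vertex -/
def dl (G : SimpleGraph V) (x : V) : SimpleGraph V where
  Adj a b := G.Adj a b ∧ a ≠ x ∧ b ≠ x
  symm := ⟨fun _ _ h => ⟨h.1.symm, h.2.2, h.2.1⟩⟩
  loopless := ⟨fun a h => G.loopless.irrefl a h.1⟩

lemma Rep.local (hT : G.IsTree) {x p v : V} {n : ℕ} (h : Rep G p v n) (hp : PV G p v)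
    (hx : x ∉ Br G p v) : Rep (dl G x) p v n := by
  induction h with
  | intro p v n f hf h ih =>
    have hvx : v ≠ x := by rintro rfl; exact hx (self_mem_br _ _)
    have hwx : ∀ w, G.Adj v w → w ≠ p → w ≠ x := by
      rintro w hw hwp rfl; exact hx (br_sub hT hp hw hwp (self_mem_br _ _))
    have e : {w | (dl G x).Adj v w ∧ w ≠ p} = {w | G.Adj v w ∧ w ≠ p} := by
      ext w
      exact ⟨fun hw => ⟨hw.1.1, hw.2⟩, fun hw => ⟨⟨hw.1, hvx, hwx w hw.1 hw.2⟩, hw.2⟩⟩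
    refine Rep.intro p v n f (by rw [e]; exact hf) (fun w hw hwp => ?_)
    exact ih w hw.1 hwp (Or.inr hw.1) (fun h2 => hx (br_sub hT hp hw.1 hwp h2))

lemma Rep.child {p v : V} {n i : ℕ} (h : Rep G p v n) (hi : i ∈ bits n) :
    ∃ w, G.Adj v w ∧ w ≠ p ∧ Rep G v w i := by
  cases h with
  | intro _ _ _ f hf h =>
    obtain ⟨w, hw, rfl⟩ := hf.surjOn hi
    exact ⟨w, hw.1, hw.2, h w hw.1 hw.2⟩

lemma Rep.child' {p v w : V} {n : ℕ} (h : Rep G p v n) (hw : G.Adj v w) (hwp : w ≠ p) :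
    ∃ i ∈ bits n, Rep G v w i := by
  cases h with
  | intro _ _ _ f hf h =>
    exact ⟨f w, hf.mapsTo ⟨hw, hwp⟩, h w hw hwp⟩

/-- being a leaf -/
def IsLf (G : SimpleGraph V) (x : V) : Prop := ∃ y, G.Adj x y ∧ ∀ z, G.Adj x z → z = y

lemma del_rep (hT : G.IsTree) {n m : ℕ} (hd : Del n m) :
    ∀ p v, PV G p v → Rep G p v n →
      ∃ x, x ∈ Br G p v ∧ x ≠ v ∧ IsLf G x ∧ Rep (dl G x) p v m := by
  classical
  induction hd with
  | leaf n h0 =>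
    intro p v hp hr
    cases hr with
    | intro _ _ _ f hf h =>
      obtain ⟨x, ⟨hx, hxp⟩, hfx⟩ := hf.surjOn h0
      have hr := h x hx hxp
      rw [hfx] at hr
      refine ⟨x, br_sub hT hp hx hxp (self_mem_br _ _), hx.ne', ⟨v, hx.symm, ?_⟩, ?_⟩
      · intro z hz
        by_contra hzv
        obtain ⟨i, hi, -⟩ := hr.child' hz hzv
        simp at hi
      · refine Rep.intro p v _ f ?_ ?_
        · rw [bits_mk, Finset.coe_erase]
          refine ⟨?_, ?_, ?_⟩
          · rintro w ⟨hw, hwp⟩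
            refine ⟨hf.mapsTo ⟨hw.1, hwp⟩, fun h1 => hw.2.2 ?_⟩
            exact hf.injOn ⟨hw.1, hwp⟩ ⟨hx, hxp⟩ (by rw [hfx]; exact h1)
          · intro w hw w' hw'
            exact hf.injOn ⟨hw.1.1, hw.2⟩ ⟨hw'.1.1, hw'.2⟩
          · rintro i ⟨hi, hi0⟩
            obtain ⟨w, hw, rfl⟩ := hf.surjOn hi
            refine ⟨w, ⟨⟨hw.1, hx.ne, ?_⟩, hw.2⟩, rfl⟩
            rintro rfl; exact hi0 hfx
        · intro w hw hwp
          refine (h w hw.1 hwp).local hT (Or.inr hw.1) (fun h1 => hw.2.2 ?_)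
          exact br_disj hT hw.1 hx h1 (self_mem_br _ _)
  | step n i j hi hd hj ih =>
    intro p v hp hr
    cases hr with
    | intro _ _ _ f hf h =>
      obtain ⟨w, ⟨hw, hwp⟩, rfl⟩ := hf.surjOn hi
      obtain ⟨x, hx, hxw, hl, hr⟩ := ih v w (Or.inr hw) (h w hw hwp)
      have hxv : x ≠ v := by rintro rfl; exact notMem_br hT hw hx
      have hux : ∀ u, G.Adj v u → u ≠ x := by
        rintro u hu rfl
        exact hxw (br_disj hT hu hw (self_mem_br _ _) hx)
      refine ⟨x, br_sub hT hp hw hwp hx, hxv, hl, ?_⟩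
      refine Rep.intro p v _ (Function.update f w j) ?_ ?_
      · have e : {u | (dl G x).Adj v u ∧ u ≠ p} = {u | G.Adj v u ∧ u ≠ p} := by
          ext u
          exact ⟨fun hu => ⟨hu.1.1, hu.2⟩, fun hu => ⟨⟨hu.1, hxv.symm, hux u hu.1⟩, hu.2⟩⟩
        rw [e, bits_mk, Finset.coe_insert, Finset.coe_erase]
        refine ⟨?_, ?_, ?_⟩
        · intro u hu
          rcases eq_or_ne u w with rfl | hne
          · simp
          · rw [Function.update_of_ne hne]
            right
            exact ⟨hf.mapsTo hu, fun h1 => hne (hf.injOn hu ⟨hw, hwp⟩ h1)⟩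
        · intro u hu u' hu' he
          rcases eq_or_ne u w with rfl | hne
          · rcases eq_or_ne u' u with rfl | hne'
            · rfl
            · rw [Function.update_self, Function.update_of_ne hne'] at he
              exact absurd (by rw [he]; exact hf.mapsTo hu') hj
          · rcases eq_or_ne u' w with rfl | hne'
            · rw [Function.update_self, Function.update_of_ne hne] at he
              exact absurd (by rw [← he]; exact hf.mapsTo hu) hj
            · rw [Function.update_of_ne hne, Function.update_of_ne hne'] at he
              exact hf.injOn hu hu' he
        · rintro k (rfl | ⟨hk, hkw⟩)
          · exact ⟨w, ⟨hw, hwp⟩, by simp⟩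
          · obtain ⟨u, hu, rfl⟩ := hf.surjOn hk
            refine ⟨u, hu, Function.update_of_ne ?_ _ _⟩
            rintro rfl; exact hkw rfl
      · intro u hu hup
        rcases eq_or_ne u w with rfl | hne
        · rw [Function.update_self]; exact hr
        · rw [Function.update_of_ne hne]
          exact (h u hu.1 hup).local hT (Or.inr hu.1) (fun h1 => hne (br_disj hT hu.1 hw h1 hx))

lemma Rep.join {c x : V} {a b : ℕ} (hcx : G.Adj c x) (ha : Rep G x c a) (hb : Rep G c x b)
    (hab : b ∉ bits a) : Rep G c c (mk (insert b (bits a))) := by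
  classical
  cases ha with
  | intro _ _ _ f hf h =>
    refine Rep.intro c c _ (Function.update f x b) ?_ ?_
    · rw [bits_mk, Finset.coe_insert]
      refine ⟨?_, ?_, ?_⟩
      · intro u hu
        rcases eq_or_ne u x with rfl | hne
        · simp
        · rw [Function.update_of_ne hne]; right; exact hf.mapsTo ⟨hu.1, hne⟩
      · intro u hu u' hu' he
        rcases eq_or_ne u x with rfl | hne
        · rcases eq_or_ne u' u with rfl | hne'
          · rfl
          · rw [Function.update_self, Function.update_of_ne hne'] at he
            exact absurd (by rw [he]; exact hf.mapsTo ⟨hu'.1, hne'⟩) hab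
        · rcases eq_or_ne u' x with rfl | hne'
          · rw [Function.update_self, Function.update_of_ne hne] at he
            exact absurd (by rw [← he]; exact hf.mapsTo ⟨hu.1, hne⟩) hab
          · rw [Function.update_of_ne hne, Function.update_of_ne hne'] at he
            exact hf.injOn ⟨hu.1, hne⟩ ⟨hu'.1, hne'⟩ he
      · rintro k (rfl | hk)
        · exact ⟨x, ⟨hcx, hcx.ne'⟩, by simp⟩
        · obtain ⟨u, hu, rfl⟩ := hf.surjOn hk
          exact ⟨u, ⟨hu.1, hu.1.ne'⟩, Function.update_of_ne hu.2 _ _⟩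
    · intro u hu _
      rcases eq_or_ne u x with rfl | hne
      · rw [Function.update_self]; exact hb
      · rw [Function.update_of_ne hne]; exact h u hu hne

lemma Rep.split {c : V} {n i : ℕ} (h : Rep G c c n) (hi : i ∈ bits n) :
    ∃ x, G.Adj c x ∧ Rep G c x i ∧ Rep G x c (mk ((bits n).erase i)) := by
  cases h with
  | intro _ _ _ f hf h =>
    obtain ⟨x, ⟨hx, hxc⟩, rfl⟩ := hf.surjOn hi
    refine ⟨x, hx, h x hx hxc, Rep.intro x c _ f ?_ (fun w hw _ => h w hw hw.ne')⟩
    rw [bits_mk, Finset.coe_erase]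
    refine ⟨?_, ?_, ?_⟩
    · rintro u ⟨hu, hux⟩
      exact ⟨hf.mapsTo ⟨hu, hu.ne'⟩, fun h1 => hux (hf.injOn ⟨hu, hu.ne'⟩ ⟨hx, hxc⟩ h1)⟩
    · rintro u ⟨hu, hux⟩ u' ⟨hu', hux'⟩
      exact hf.injOn ⟨hu, hu.ne'⟩ ⟨hu', hu'.ne'⟩
    · rintro k ⟨hk, hkx⟩
      obtain ⟨u, hu, rfl⟩ := hf.surjOn hk
      refine ⟨u, ⟨hu.1, ?_⟩, rfl⟩
      rintro rfl; exact hkx rfl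

lemma bc_add [Finite V] (hT : G.IsTree) {p v : V} (h : G.Adj p v) :
    bc G p v + bc G v p = Nat.card V := by
  have e : Br G v p = (Br G p v)ᶜ := by
    ext u; rw [Set.mem_compl_iff, br_compl hT h.symm]
  rw [bc, bc, e, Set.ncard_add_ncard_compl]

lemma bc_self (v : V) : bc G v v = Nat.card V := by
  rw [bc, br_self, Set.ncard_univ]

lemma cent_aux [Finite V] (hT : G.IsTree) {c : V}
    (hc : ∀ u, G.Adj c u → 2 * bc G c u ≤ Nat.card V) (d : ℕ) :
    ∀ c' u', G.dist c' c = d + 1 → G.Adj c' u' → G.dist u' c = d →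
      Nat.card V ≤ 2 * bc G c' u' ∧ (1 ≤ d → Nat.card V < 2 * bc G c' u') := by
  induction d with
  | zero =>
    intro c' u' h1 h2 h3
    have h4 : u' = c := by rwa [hT.connected.dist_eq_zero_iff] at h3
    subst h4
    have := bc_add hT h2
    have := hc c' h2.symm
    exact ⟨by omega, by omega⟩
  | succ d ih =>
    intro c' u' h1 h2 h3
    have hne : u' ≠ c := by rintro rfl; simp at h3
    obtain ⟨w, hw, hd⟩ := nxt_exists hT hne
    have h5 := (ih u' w h3 hw (by omega)).1
    have h6 : w ≠ c' := by rintro rfl; omega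
    have h7 := bc_lt hT (Or.inr h2) hw h6
    exact ⟨by omega, by omega⟩

lemma move [Finite V] (hT : G.IsTree) {c : V} {n : ℕ} (h : Rep G c c n)
    (hn : ∀ i ∈ bits n, 2 * sz i ≤ sz n) (φ : G ≃g G) (hφ : φ c ≠ c) :
    G.Adj (φ c) c ∧ 2 * bc G (φ c) c = sz n := by
  have hN : Nat.card V = sz n := by rw [← bc_self (G := G) c]; exact h.card hT (Or.inl rfl)
  have hb : ∀ c', Rep G c' c' n → ∀ u, G.Adj c' u → 2 * bc G c' u ≤ Nat.card V := by
    intro c' hc' u hu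
    obtain ⟨i, hi, hr⟩ := hc'.child' hu hu.ne'
    rw [hr.card hT (Or.inr hu), hN]
    exact hn i hi
  obtain ⟨u, hu, hd⟩ := nxt_exists hT hφ
  have h1 := cent_aux hT (hb c h) _ _ u hd hu rfl
  have h2 := hb _ (h.map_iso φ) u hu
  have h3 : G.dist u c = 0 := by
    by_contra h3
    have := h1.2 (by omega)
    omega
  rw [hT.connected.dist_eq_zero_iff] at h3
  subst h3
  exact ⟨hu, by omega⟩

lemma autFree_uni [Finite V] (hT : G.IsTree) {c : V} {n : ℕ} (h : Rep G c c n)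
    (hn : ∀ i ∈ bits n, 2 * sz i < sz n) : AutFree G := by
  intro φ v
  have hc : φ c = c := by
    by_contra hne
    obtain ⟨h1, h2⟩ := move hT h (fun i hi => (hn i hi).le) φ hne
    obtain ⟨i, hi, hr⟩ := (h.map_iso φ).child' h1 h1.ne'
    rw [hr.card hT (Or.inr h1)] at h2
    have := hn i hi
    omega
  exact h.fix hT φ (Or.inl rfl) hc hc v (by rw [br_self]; trivial)

lemma bi_aux [Finite V] (hT : G.IsTree) {c x : V} {a b : ℕ} (hcx : G.Adj c x)
    (ha : Rep G x c a) (hb : Rep G c x b) (hs : sz a = sz b) (φ : G ≃g G) :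
    (φ c = c ∨ φ c = x) ∧ ∃ n, Rep G c c n := by
  have hab : b ∉ bits a := fun h => by have := sz_lt_of_mem h; omega
  have hj := Rep.join hcx ha hb hab
  refine ⟨?_, _, hj⟩
  have hsz : sz (mk (insert b (bits a))) = sz a + sz b := by
    rw [sz_mk, Finset.sum_insert hab, sz_eq a]; omega
  by_contra hcon
  push Not at hcon
  obtain ⟨h1, h2⟩ := move hT hj (by
    intro i hi
    rw [bits_mk, Finset.mem_insert] at hi
    rcases hi with rfl | hi
    · omega
    · have := sz_lt_of_mem hi; omega) φ hcon.1
  have h3 := bc_add hT h1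
  have h4 : Nat.card V = sz a + sz b := by
    rw [← hsz, ← bc_self (G := G) c]; exact hj.card hT (Or.inl rfl)
  have h5 := bc_lt hT (Or.inr hcx.symm) h1.symm hcon.2
  have h6 := ha.card hT (Or.inr hcx.symm)
  omega

lemma autFree_bi' [Finite V] (hT : G.IsTree) {c x : V} {a b : ℕ} (hcx : G.Adj c x)
    (ha : Rep G x c a) (hb : Rep G c x b) (hs : sz a = sz b) (hab : a ≠ b) : AutFree G := by
  intro φ v
  obtain ⟨h1, n, hn⟩ := bi_aux hT hcx ha hb hs φ
  obtain ⟨h2, -⟩ := bi_aux hT hcx.symm hb ha hs.symm φ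
  have hc : φ c = c := by
    by_contra hne
    have h3 : φ c = x := h1.resolve_left hne
    have h4 : φ x = c := by
      refine h2.resolve_left fun h => ?_
      rw [← h] at h3
      exact hcx.ne (φ.injective (h3.trans (by rw [h])))
    have h5 := ha.map_iso φ
    rw [h3, h4] at h5
    exact hab (h5.unique hb)
  exact hn.fix hT φ (Or.inl rfl) hc hc v (by rw [br_self]; trivial)

lemma Rep.induce {x p v : V} {n : ℕ} (h : Rep (dl G x) p v n) (hp : p ≠ x) (hv : v ≠ x) :
    Rep (G.induce {x}ᶜ) (⟨p, hp⟩ : ({x}ᶜ : Set V)) ⟨v, hv⟩ n := by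
  refine h.comap (e := Subtype.val) Subtype.val_injective ?_ ?_ _ _ rfl rfl
  · rintro ⟨a, ha⟩ ⟨b, hb⟩
    exact ⟨fun h => ⟨h, ha, hb⟩, fun h => h.1⟩
  · rintro ⟨a, ha⟩ b hb
    exact ⟨⟨b, hb.2.2⟩, rfl⟩

lemma tree_induce [Finite V] (hT : G.IsTree) {x : V} (hx : IsLf G x) :
    (G.induce {x}ᶜ).IsTree := by
  classical
  have := Fintype.ofFinite V
  refine ⟨?_, hT.isAcyclic.induce _⟩
  apply hT.connected.induce_compl_singleton_of_degree_eq_one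
  rw [degree_eq_one_iff_existsUnique_adj]
  obtain ⟨y, hy, hu⟩ := hx
  exact ⟨y, hy, hu⟩

lemma rep_cut_case [Finite V] (hT : G.IsTree) {p v : V} {a b a' : ℕ} (hpv : G.Adj p v)
    (ha : Rep G p v a) (hb : Rep G v p b) (hs : sz a = sz b) (hd : Del a a') (hne : mk {a'} ≠ b) :
    ∃ x, IsLf G x ∧ AutFree (G.induce {x}ᶜ) := by
  obtain ⟨x, hx, hxv, hl, hr⟩ := del_rep hT hd p v (Or.inr hpv) ha
  have hxb := (br_compl hT hpv).1 hx
  have hr2 := hb.local hT (Or.inr hpv.symm) hxb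
  have hxp : x ≠ p := by rintro rfl; exact hxb (self_mem_br _ _)
  have i1 := hr.induce hxp.symm hxv.symm
  have i2 := hr2.induce hxv.symm hxp.symm
  have hsd := hd.sz
  have hab : a' ∉ bits b := by
    intro hm
    apply hne
    have h1 := Finset.add_sum_erase (bits b) sz hm
    have h2 := sz_eq b
    have h3 : ∑ i ∈ (bits b).erase a', sz i = 0 := by omega
    apply bits_inj
    rw [bits_mk]
    ext z
    rw [Finset.mem_singleton]
    constructor
    · rintro rfl; exact hm
    · intro hz
      by_contra hza
      have := Finset.sum_eq_zero_iff.1 h3 z (Finset.mem_erase.2 ⟨hza, hz⟩)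
      have := sz_pos z
      omega
  refine ⟨x, hl, ?_⟩
  have hpv' : (G.induce {x}ᶜ).Adj (⟨p, hxp.symm⟩ : ({x}ᶜ : Set V)) ⟨v, hxv.symm⟩ := hpv
  refine autFree_uni (tree_induce hT hl) (Rep.join hpv' i2 i1 hab) ?_
  have hsz : sz (mk (insert a' (bits b))) = sz b + sz a' := by
    rw [sz_mk, Finset.sum_insert hab, sz_eq b]; omega
  intro i hi
  rw [bits_mk, Finset.mem_insert] at hi
  rcases hi with rfl | hi
  · omega
  · have := sz_lt_of_mem hi; omega

lemma rep_root_case [Finite V] (hT : G.IsTree) {c : V} {n m : ℕ}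
    (hr : Rep G c c n) (hd : Del n m) (hg : Good m) :
    ∃ x, IsLf G x ∧ AutFree (G.induce {x}ᶜ) := by
  obtain ⟨x, hx, hxc, hl, hr⟩ := del_rep hT hd c c (Or.inl rfl) hr
  have i1 := hr.induce hxc.symm hxc.symm
  have hT' := tree_induce hT hl
  refine ⟨x, hl, ?_⟩
  rcases hg with hg | ⟨i, hi, hs, hne⟩
  · exact autFree_uni hT' i1 hg
  · obtain ⟨y, hy, h1, h2⟩ := i1.split hi
    refine autFree_bi' hT' hy h2 h1 ?_ hne
    rw [sz_mk]
    have h3 := Finset.add_sum_erase (bits m) sz hi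
    have h4 := sz_eq m
    omega

lemma exists_cut_or_cent [Finite V] (hT : G.IsTree) :
    (∃ p v, G.Adj p v ∧ bc G p v = bc G v p) ∨
      ∃ c, ∀ u, G.Adj c u → 2 * bc G c u < Nat.card V := by
  classical
  by_cases h : ∃ p v, G.Adj p v ∧ bc G p v = bc G v p
  · exact Or.inl h
  right
  push Not at h
  have hex : ∃ k, ∃ p v, PV G p v ∧ Nat.card V ≤ 2 * bc G p v ∧ bc G p v = k := by
    obtain ⟨v⟩ := hT.connected.nonempty
    refine ⟨_, v, v, Or.inl rfl, ?_, rfl⟩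
    rw [bc_self]; omega
  obtain ⟨p, v, hpv, h1, h2⟩ := Nat.find_spec hex
  refine ⟨v, fun u hu => ?_⟩
  by_cases hup : u = p
  · subst hup
    have := bc_add hT hu
    have := h v u hu
    omega
  · have h3 := bc_lt hT hpv hu hup
    by_contra h4
    exact Nat.find_min hex (m := bc G v u) (by omega) ⟨v, u, Or.inr hu, by omega, rfl⟩

lemma step_or [Finite V] (hT : G.IsTree) (h2 : 2 ≤ Nat.card V) (hA : AutFree G) :
    (∃ x, IsLf G x ∧ AutFree (G.induce {x}ᶜ)) ∨ ∃ c, Rep G c c e7 := by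
  rcases exists_cut_or_cent hT with ⟨p, v, hpv, hbc⟩ | ⟨c, hc⟩
  · left
    obtain ⟨a, ha⟩ := exists_rep hT hA p v (Or.inr hpv)
    obtain ⟨b, hb⟩ := exists_rep hT hA v p (Or.inr hpv.symm)
    have hs : sz a = sz b := by
      rw [← ha.card hT (Or.inr hpv), ← hb.card hT (Or.inr hpv.symm), hbc]
    have hab : a ≠ b := by
      rintro rfl
      have hn : a ∉ bits a := fun h => by have := lt_of_mem_bits h; omega
      have r1 := Rep.join hpv hb ha hn
      have r2 := Rep.join hpv.symm ha hb hn
      obtain ⟨F, hF⟩ := iso_of_rep hT hT r1 r2 (Or.inl rfl) (Or.inl rfl)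
      have := autFree_bi hA hF p
      rw [hF.2.1] at this
      exact hpv.ne' this
    rcases exists_del_ne a b hs hab with ⟨a', hd, hne⟩ | ⟨b', hd, hne⟩
    · exact rep_cut_case hT hpv ha hb hs hd hne
    · exact rep_cut_case hT hpv.symm hb ha hs.symm hd hne
  · obtain ⟨n, hn⟩ := exists_rep hT hA c c (Or.inl rfl)
    have hN : Nat.card V = sz n := by rw [← bc_self (G := G) c]; exact hn.card hT (Or.inl rfl)
    have hn0 : n ≠ 0 := by rintro rfl; rw [sz_zero] at hN; omega
    rcases model_step n hn0 (by
      intro i hi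
      obtain ⟨w, hw, hwc, hr⟩ := hn.child hi
      rw [← hr.card hT (Or.inr hw), ← hN]
      exact hc w hw) with ⟨m, hd, hg⟩ | rfl
    · exact Or.inl (rep_root_case hT hn hd hg)
    · exact Or.inr ⟨c, hn⟩

instance decE7 : DecidableRel E7.Adj := fun a b =>
  decidable_of_iff (s(a, b) ∈ ({s(0, 1), s(0, 2), s(2, 3), s(0, 4), s(4, 5), s(5, 6)} :
    Finset (Sym2 (Fin 7))) ∧ a ≠ b) (by simp [E7])

lemma e7_tree : E7.IsTree := by
  rw [isTree_iff_connected_and_card]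
  constructor
  · have h01 : E7.Adj 0 1 := by decide
    have h02 : E7.Adj 0 2 := by decide
    have h23 : E7.Adj 2 3 := by decide
    have h04 : E7.Adj 0 4 := by decide
    have h45 : E7.Adj 4 5 := by decide
    have h56 : E7.Adj 5 6 := by decide
    have key : ∀ v, E7.Reachable 0 v := by
      intro v
      fin_cases v
      · exact Reachable.refl _
      · exact h01.reachable
      · exact h02.reachable
      · exact h02.reachable.trans h23.reachable
      · exact h04.reachable
      · exact h04.reachable.trans h45.reachable
      · exact (h04.reachable.trans h45.reachable).trans h56.reachable
    exact { preconnected := fun a b => (key a).symm.trans (key b), nonempty := ⟨0⟩ }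
  · have h : E7.edgeSet = (({s(0, 1), s(0, 2), s(2, 3), s(0, 4), s(4, 5), s(5, 6)} :
        Finset (Sym2 (Fin 7))) : Set (Sym2 (Fin 7))) := by
      rw [E7, edgeSet_fromEdgeSet]
      ext e
      simp only [Set.mem_sdiff, Set.mem_insert_iff, Set.mem_singleton_iff, Finset.coe_insert,
        Finset.coe_singleton]
      constructor
      · exact fun h => h.1
      · intro h
        refine ⟨h, ?_⟩
        rcases h with rfl | rfl | rfl | rfl | rfl | rfl <;> simp
    rw [Nat.card_coe_set_eq, h, Set.ncard_coe_finset, Nat.card_eq_fintype_card, Fintype.card_fin]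
    decide

lemma rep_zero {p v : V} (h : ∀ w, G.Adj v w → w = p) : Rep G p v 0 := by
  refine Rep.intro p v 0 (fun _ => 0) ?_ (fun w hw hwp => absurd (h w hw) hwp)
  have e : {w | G.Adj v w ∧ w ≠ p} = ∅ := by
    ext w
    constructor
    · rintro ⟨h1, h2⟩; exact absurd (h w h1) h2
    · intro h; exact absurd h (Set.notMem_empty w)
  rw [e]; simp

lemma rep_one {p v w : V} {i : ℕ} (hw : G.Adj v w) (hwp : w ≠ p)
    (h : ∀ u, G.Adj v u → u ≠ p → u = w) (hr : Rep G v w i) : Rep G p v (mk {i}) := by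
  refine Rep.intro p v _ (fun _ => i) ?_ (fun u hu hup => by rw [h u hu hup]; exact hr)
  have e : {u | G.Adj v u ∧ u ≠ p} = {w} := by
    ext u
    constructor
    · rintro ⟨h1, h2⟩; exact h u h1 h2
    · rintro rfl; exact ⟨hw, hwp⟩
  rw [e]; simp

lemma rep_e7 : Rep E7 0 0 e7 := by
  have r1 : Rep E7 0 1 0 := rep_zero (by decide)
  have r3 : Rep E7 2 3 0 := rep_zero (by decide)
  have r6 : Rep E7 5 6 0 := rep_zero (by decide)
  have r2 : Rep E7 0 2 (mk {0}) := rep_one (w := 3) (by decide) (by decide) (by decide) r3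
  have r5 : Rep E7 4 5 (mk {0}) := rep_one (w := 6) (by decide) (by decide) (by decide) r6
  have r4 : Rep E7 0 4 (mk {mk {0}}) := rep_one (w := 5) (by decide) (by decide) (by decide) r5
  have m1 : mk {0} = 1 := by simp [mk]
  have m2 : mk {1} = 2 := by simp [mk]
  rw [m1] at r2
  rw [m1, m2] at r4
  have hch : ∀ w, E7.Adj 0 w → w = 1 ∨ w = 2 ∨ w = 4 := by decide
  refine Rep.intro 0 0 _ ![0, 0, 1, 0, 2, 0, 0] ?_ ?_
  · rw [e7, bits_mk, m1, m2]
    refine ⟨?_, ?_, ?_⟩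
    · rintro w ⟨hw, -⟩
      rcases hch w hw with rfl | rfl | rfl <;> simp
    · rintro w ⟨hw, -⟩ w' ⟨hw', -⟩
      rcases hch w hw with rfl | rfl | rfl <;> rcases hch w' hw' with rfl | rfl | rfl <;> simp
    · intro i hi
      simp only [Finset.coe_insert, Finset.coe_singleton, Set.mem_insert_iff,
        Set.mem_singleton_iff] at hi
      rcases hi with rfl | rfl | rfl
      · exact ⟨4, ⟨by decide, by decide⟩, rfl⟩
      · exact ⟨2, ⟨by decide, by decide⟩, rfl⟩
      · exact ⟨1, ⟨by decide, by decide⟩, rfl⟩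
  · intro w hw _
    rcases hch w hw with rfl | rfl | rfl
    · exact r1
    · exact r2
    · exact r4

lemma iso_e7 [Finite V] (hT : G.IsTree) {c : V} (h : Rep G c c e7) : Nonempty (G ≃g E7) := by
  obtain ⟨F, hF1, -, hF3⟩ := iso_of_rep hT e7_tree h rep_e7 (Or.inl rfl) (Or.inl rfl)
  obtain ⟨K, hK1, -, hK3⟩ := iso_of_rep e7_tree hT rep_e7 h (Or.inl rfl) (Or.inl rfl)
  rw [br_self, br_self, Set.bijOn_univ] at hF1 hK1
  rw [br_self] at hF3 hK3
  refine ⟨⟨Equiv.ofBijective F hF1, ?_⟩⟩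
  intro a b
  refine ⟨fun h => ?_, fun h => hF3 a trivial b trivial h⟩
  refine (bij_end (G := G) (K ∘ F) (hK1.comp hF1) ?_ a b).1 (hK3 _ trivial _ trivial h)
  intro x y hxy
  exact hK3 _ trivial _ trivial (hF3 x trivial y trivial hxy)

lemma AutFree.of_iso (e : G ≃g G') (h : AutFree G) : AutFree G' := by
  intro φ v
  have h1 := h ((e.trans φ).trans e.symm) (e.symm v)
  simpa using h1

/-- an induced subgraph of an induced subgraph -/
noncomputable def indIso (G : SimpleGraph V) (A : Set V) (S : Set A) :
    (G.induce A).induce S ≃g G.induce (Subtype.val '' S) where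
  toEquiv := Equiv.Set.image Subtype.val S Subtype.val_injective
  map_rel_iff' := by
    rintro ⟨⟨a, ha⟩, ha'⟩ ⟨⟨b, hb⟩, hb'⟩
    rfl

/-- the whole graph as an induced subgraph -/
def univIso (G : SimpleGraph V) : G ≃g G.induce Set.univ where
  toEquiv := (Equiv.Set.univ V).symm
  map_rel_iff' := by
    intro a b
    rfl

lemma card_two_false [Finite V] (h2 : Nat.card V = 2) (hA : AutFree G) : False := by
  classical
  have := Fintype.ofFinite V
  rw [Nat.card_eq_two_iff] at h2
  obtain ⟨a, b, hab, hu⟩ := h2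
  have hall : ∀ z, z = a ∨ z = b := by
    intro z
    have : z ∈ ({a, b} : Set V) := by rw [hu]; trivial
    simpa using this
  have h := hA ⟨Equiv.swap a b, by
    intro x y
    rcases hall x with rfl | rfl <;> rcases hall y with rfl | rfl <;> simp [G.adj_comm]⟩ a
  have h' : Equiv.swap a b a = a := h
  rw [Equiv.swap_apply_left] at h'
  exact hab h'.symm

universe u

lemma main (N : ℕ) : ∀ (V : Type u) [Finite V] (G : SimpleGraph V), Nat.card V = N →
    G.IsTree → 2 ≤ Nat.card V → AutFree G →
    ∃ (k : ℕ) (S : ℕ → Set V),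
      Nonempty ((G.induce (S 0)) ≃g E7) ∧
      S k = Set.univ ∧
      (∀ i < k, ∃ x ∉ S i, S (i + 1) = insert x (S i) ∧
        (G.neighborSet x ∩ S i).ncard = 1) ∧
      (∀ i ≤ k, AutFree (G.induce (S i))) := by
  induction N with
  | zero => intro V _ G h _ h2; omega
  | succ N ih =>
    intro V _ G hN hT h2 hA
    rcases step_or hT h2 hA with ⟨x, hl, hx⟩ | ⟨c, hc⟩
    · have hcard : Nat.card ({x}ᶜ : Set V) = N := by
        have h1 := Set.ncard_add_ncard_compl ({x} : Set V)
        rw [Set.ncard_singleton] at h1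
        rw [Nat.card_coe_set_eq]
        omega
      have h3 : 2 ≤ N := by
        by_contra h3
        exact card_two_false (by omega) hA
      obtain ⟨k, S, hS0, hSk, hstep, haf⟩ := ih ({x}ᶜ : Set V) (G.induce {x}ᶜ) hcard
        (tree_induce hT hl) (by omega) hx
      obtain ⟨S', hle, hgt⟩ : ∃ S' : ℕ → Set V, (∀ i, i ≤ k → S' i = Subtype.val '' (S i)) ∧
          (∀ i, k < i → S' i = Set.univ) :=
        ⟨fun i => if i ≤ k then Subtype.val '' (S i) else Set.univ,
          fun i hi => if_pos hi, fun i hi => if_neg (by omega)⟩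
      refine ⟨k + 1, S', ?_, hgt _ (by omega), ?_, ?_⟩
      · obtain ⟨e⟩ := hS0
        rw [hle 0 (Nat.zero_le _)]
        exact ⟨(indIso G _ (S 0)).symm.trans e⟩
      · intro i hi
        rcases Nat.lt_or_ge i k with hik | hik
        · obtain ⟨y, hy, hins, hnc⟩ := hstep i hik
          refine ⟨y.1, ?_, ?_, ?_⟩
          · rw [hle i hik.le]
            rintro ⟨z, hz, hzy⟩
            exact hy (Subtype.val_injective hzy ▸ hz)
          · rw [hle (i + 1) hik, hle i hik.le, hins, Set.image_insert_eq]
          · rw [hle i hik.le, ← hnc, ← Set.ncard_image_of_injective _ Subtype.val_injective]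
            congr 1
            ext z
            constructor
            · rintro ⟨h1, ⟨z, hz, rfl⟩⟩
              exact ⟨z, ⟨h1, hz⟩, rfl⟩
            · rintro ⟨z, ⟨h1, hz⟩, rfl⟩
              exact ⟨h1, ⟨z, hz, rfl⟩⟩
        · have hik' : i = k := by omega
          subst hik'
          have him : Subtype.val '' (S i) = ({x}ᶜ : Set V) := by
            rw [hSk, Set.image_univ, Subtype.range_coe]
          refine ⟨x, ?_, ?_, ?_⟩
          · rw [hle i le_rfl, him]; simp
          · rw [hgt (i + 1) (by omega), hle i le_rfl, him]
            ext z; simp [em]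
          · rw [hle i le_rfl, him]
            obtain ⟨y, hy, hu⟩ := hl
            rw [Set.ncard_eq_one]
            refine ⟨y, ?_⟩
            ext z
            constructor
            · rintro ⟨h1, -⟩; exact hu z h1
            · rintro rfl; exact ⟨hy, hy.ne'⟩
      · intro i hi
        rcases Nat.lt_or_ge k i with hik | hik
        · rw [hgt i hik]
          exact AutFree.of_iso (univIso G) hA
        · rw [hle i hik]
          exact AutFree.of_iso (indIso G _ (S i)) (haf i hik)
    · obtain ⟨e⟩ := iso_e7 hT hc
      refine ⟨0, fun _ => Set.univ, ⟨(univIso G).symm.trans e⟩, rfl, ?_, ?_⟩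
      · intro i hi; omega
      · intro i _; exact AutFree.of_iso (univIso G) hA

end AFT

/-- Every finite automorphism-free tree `T` can be obtained from `E7` by successively
adjoining one leaf at a time (a new vertex joined to exactly one existing vertex),
with every intermediate tree automorphism-free.  This is expressed by a chain of
vertex subsets `S 0 ⊆ S 1 ⊆ ⋯ ⊆ S k = V(T)` of `T`, whose induced subgraphs are the
intermediate trees: the first is isomorphic to `E7`, the last is `T` itself. -/
theorem stmt_1 {V : Type*} [Fintype V] (G : SimpleGraph V)
    (hT : G.IsTree) (h2 : 2 ≤ Fintype.card V) (hAF : AutFree G) :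
    ∃ (k : ℕ) (S : ℕ → Set V),
      Nonempty ((G.induce (S 0)) ≃g E7) ∧
      S k = Set.univ ∧
      (∀ i < k, ∃ x ∉ S i, S (i + 1) = insert x (S i) ∧
        (G.neighborSet x ∩ S i).ncard = 1) ∧
      (∀ i ≤ k, AutFree (G.induce (S i))) := by
  exact AFT.main _ V G rfl hT (by rw [Nat.card_eq_fintype_card]; exact h2) hAF
end
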